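/- arXiv:1401.2789 — 9 statements merged into one kernel-verified Lean document; each statement's English description precedes it below -/
import Mathlib

section
/- Let k and d be integers with d > 1 and let j_1, …, j_d be integers with 0 ≤ j_i < k for each i. If f : ℂ → ℂ is entire and satisfies f^{(k)}(z) = f^{(j_1)}(z) ⋯ f^{(j_d)}(z) for all z ∈ ℂ, then f is a polynomial. -/
lemma poly_of_growth (f : ℂ → ℂ) (hf : Differentiable ℂ f) (C : ℝ) (m : ℕ)
    (h : ∀ z : ℂ, 1 ≤ ‖z‖ → ‖f z‖ ≤ C * ‖z‖ ^ m) :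
    ∃ p : Polynomial ℂ, ∀ z : ℂ, f z = p.eval z := by
  have hC : 0 ≤ C := by
    have := h 1 (by simp)
    simp at this
    exact (norm_nonneg _).trans this
  have hz : ∀ n, m < n → iteratedDeriv n f 0 = 0 := by
    intro n hn
    have hb : ∀ R : ℝ, 1 ≤ R → ‖iteratedDeriv n f 0‖ ≤ n.factorial * C / R := by
      intro R hR
      have hR0 : 0 < R := by linarith
      have := Complex.norm_iteratedDeriv_le_of_forall_mem_sphere_norm_le (c := 0) (R := R)
        (C := C * R ^ m) n hR0 hf.diffContOnCl (by
          intro z hz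
          have hz' : ‖z‖ = R := by simpa using hz
          have := h z (by rw [hz']; exact hR)
          rwa [hz'] at this)
      refine this.trans ?_
      rw [div_le_div_iff₀ (by positivity) hR0]
      have h1 : R ^ m * R ≤ R ^ n := by
        rw [← pow_succ]
        exact pow_le_pow_right₀ hR hn
      calc (n.factorial : ℝ) * (C * R ^ m) * R = n.factorial * C * (R ^ m * R) := by ring
        _ ≤ _ := by gcongr
    have ht : Filter.Tendsto (fun R : ℝ => n.factorial * C / R) Filter.atTop (nhds 0) :=
      Filter.Tendsto.const_div_atTop Filter.tendsto_id _
    have : ‖iteratedDeriv n f 0‖ ≤ 0 :=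
      ge_of_tendsto ht ((Filter.eventually_ge_atTop 1).mono hb)
    simpa using this
  refine ⟨∑ n ∈ Finset.range (m + 1),
    Polynomial.C ((n.factorial : ℂ)⁻¹ * iteratedDeriv n f 0) * Polynomial.X ^ n, fun z => ?_⟩
  rw [← Complex.taylorSeries_eq_of_entire' 0 z hf, tsum_eq_sum (s := Finset.range (m+1))]
  · simp [Polynomial.eval_finsetSum]
  · intro n hn
    rw [hz n (by simpa using hn)]
    simp

lemma local_est (f : ℂ → ℂ) (hf : Differentiable ℂ f) (z₀ κ : ℂ) (M : ℝ) (hM : 0 < M)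
    (h0 : f z₀ ≠ 0) (hκ : κ ≠ 0)
    (h : ∀ w : ℂ, ‖w‖ * ‖κ‖ < 1 →
      ‖f (z₀ + w)‖ ≤ ‖f z₀‖ * Real.exp ((κ * w).re) * (1 + M)) (j : ℕ) :
    ‖iteratedDeriv j f z₀ - f z₀ * κ ^ j‖ ≤
      (j.factorial * 2 ^ j : ℝ) * (6 * M) * (‖f z₀‖ * ‖κ‖ ^ j) := by
  have hκ' : 0 < ‖κ‖ := norm_pos_iff.2 hκ
  have hf0 : 0 < ‖f z₀‖ := norm_pos_iff.2 h0
  set g : ℂ → ℂ := fun w => f (z₀ + w) / f z₀ * Complex.exp (-(κ * w)) - 1 with hg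
  have hgd : Differentiable ℂ g := by
    have : Differentiable ℂ fun w => f (z₀ + w) := hf.comp (by fun_prop)
    fun_prop
  have hg1 : ∀ w : ℂ, ‖w‖ ≤ 1 / (2 * ‖κ‖) → ‖g w‖ ≤ 2 * M := by
    intro w hw
    have hR : 0 < 1 / ‖κ‖ := by positivity
    have hw2 : ‖w‖ ≤ 1 / ‖κ‖ / 2 := by
      rw [div_div, mul_comm ‖κ‖]; exact hw
    have := Complex.borelCaratheodory_zero (f := g) (M := M) (R := 1 / ‖κ‖) (z := w) hM
      hgd.differentiableOn (by
        intro x hx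
        have hx' : ‖x‖ < 1 / ‖κ‖ := by simpa using hx
        have hb := h x ((lt_div_iff₀ hκ').1 hx')
        have h1 : ‖f (z₀ + x) / f z₀ * Complex.exp (-(κ * x))‖ ≤ 1 + M := by
          rw [norm_mul, norm_div, Complex.norm_exp, Complex.neg_re, Real.exp_neg, div_mul_eq_mul_div,
            div_le_iff₀ hf0, ← div_eq_mul_inv, div_le_iff₀ (Real.exp_pos _)]
          linarith
        have h2 := Complex.re_le_norm (f (z₀ + x) / f z₀ * Complex.exp (-(κ * x)))
        show (g x).re ≤ M
        simp only [hg, Complex.sub_re, Complex.one_re]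
        linarith) hR (by simp only [Metric.mem_ball, dist_zero_right]; linarith) (by simp [hg, h0])
    refine this.trans ?_
    rw [div_le_iff₀ (by linarith)]
    have : ‖w‖ ≤ 1 / ‖κ‖ - ‖w‖ := by linarith
    gcongr
  set F : ℂ → ℂ := fun w => f (z₀ + w) - f z₀ * Complex.exp (κ * w) with hF
  have hFd : Differentiable ℂ F := by
    have : Differentiable ℂ fun w => f (z₀ + w) := hf.comp (by fun_prop)
    fun_prop
  have hFg : ∀ w, F w = f z₀ * Complex.exp (κ * w) * g w := by
    intro w
    simp only [hF, hg]
    have : Complex.exp (κ * w) ≠ 0 := Complex.exp_ne_zero _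
    rw [Complex.exp_neg]
    field_simp
  have hc := Complex.norm_iteratedDeriv_le_of_forall_mem_sphere_norm_le (c := 0)
    (R := 1 / (2 * ‖κ‖)) (C := ‖f z₀‖ * (6 * M)) (f := F) j (by positivity) hFd.diffContOnCl (by
      intro w hw
      have hw' : ‖w‖ = 1 / (2 * ‖κ‖) := by simpa using hw
      have h1 := hg1 w hw'.le
      have h2 : ‖Complex.exp (κ * w)‖ ≤ 3 := by
        rw [Complex.norm_exp]
        have h3 : (κ * w).re ≤ 1 := by
          refine (Complex.re_le_norm _).trans ?_
          rw [norm_mul, hw']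
          field_simp
          norm_num
        have := Real.exp_le_exp.2 h3
        have := Real.exp_one_lt_d9
        linarith
      rw [hFg, norm_mul, norm_mul]
      calc ‖f z₀‖ * ‖Complex.exp (κ * w)‖ * ‖g w‖ ≤ ‖f z₀‖ * 3 * (2 * M) := by gcongr
        _ = _ := by ring)
  have hFj : iteratedDeriv j F 0 = iteratedDeriv j f z₀ - f z₀ * κ ^ j := by
    have a1 : ContDiff ℂ j (fun w => f (z₀ + w)) := 
      hf.contDiff.comp (by fun_prop)
    have a2 : ContDiff ℂ j (fun w => f z₀ * Complex.exp (κ * w)) := by fun_prop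
    rw [hF, iteratedDeriv_fun_sub a1.contDiffAt a2.contDiffAt, iteratedDeriv_comp_const_add,
      iteratedDeriv_const_mul_field, iteratedDeriv_cexp_const_mul]
    simp
  rw [← hFj]
  refine hc.trans (le_of_eq ?_)
  rw [one_div, inv_pow, div_inv_eq_mul, mul_pow]
  ring

lemma weight_est (n B A D K : ℝ) (u : ℂ) (hn : 1 ≤ n) (hB : 8 ≤ B) (hD : 0 < D)
    (hAD : B ≤ A / D) (hK : K = n + A / D ^ 2) (hu : ‖u‖ * K < 1) :
    u.re + ‖u‖ ^ 2 / 2 < D ∧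
    n * (u.re + ‖u‖ ^ 2 / 2) + A / (D - (u.re + ‖u‖ ^ 2 / 2)) - A / D
      ≤ K * u.re + (1 / (2 * n) + 8 / B) := by
  have hA : 0 < A := by
    have : 0 < A / D := by linarith
    exact (div_pos_iff_of_pos_right hD).1 this
  have hq : 0 < A / D ^ 2 := by positivity
  have hK0 : 0 < K := by linarith
  set a := ‖u‖ with ha
  have ha0 : 0 ≤ a := norm_nonneg _
  have har : |u.re| ≤ a := Complex.abs_re_le_norm u
  set s := u.re + a ^ 2 / 2 with hs
  have haK : a < 1 / K := (lt_div_iff₀ hK0).2 hu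
  have ha1 : a ≤ 1 := by nlinarith
  have hsabs : |s| ≤ 3 / 2 * a := by
    rw [abs_le] at har ⊢
    constructor <;> nlinarith
  have haq : a * (A / D ^ 2) ≤ 1 := by nlinarith
  have haD : a * B ≤ D := by
    have h1 : a * (A / D ^ 2) = a * (A / D) / D := by field_simp
    rw [h1, div_le_one hD] at haq
    nlinarith
  have haD8 : a * 8 ≤ D := by nlinarith
  have hsD : |s| ≤ D / 2 := by linarith
  have hsD' := (abs_le.1 hsD).2
  refine ⟨by linarith, ?_⟩
  have hDs : 0 < D - s := by linarith
  have e1 : A / (D - s) - A / D = A / D ^ 2 * s + A / D ^ 2 * s ^ 2 / (D - s) := by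
    field_simp
    ring
  have e2 : A / D ^ 2 * s ^ 2 / (D - s) ≤ 5 / B := by
    have hs2 : s ^ 2 ≤ 9 / 4 * a ^ 2 := by
      have := sq_abs s
      nlinarith [abs_nonneg s]
    have hB0 : 0 < B := by linarith
    rw [div_le_div_iff₀ hDs hB0]
    have : A / D ^ 2 * s ^ 2 * B ≤ 9 / 4 * D := by
      calc A / D ^ 2 * s ^ 2 * B ≤ A / D ^ 2 * (9 / 4 * a ^ 2) * B := by gcongr
        _ = 9 / 4 * ((a * (A / D ^ 2)) * (a * B)) := by ring
        _ ≤ 9 / 4 * (1 * D) := by gcongr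
        _ = _ := by ring
    linarith
  have e3 : K * (a ^ 2 / 2) ≤ 1 / (2 * n) := by
    rw [le_div_iff₀ (by linarith)]
    have h1 : a * n ≤ 1 := by nlinarith
    have : (a * K) * (a * n) ≤ 1 * 1 := by gcongr; 
    nlinarith
  have e4 : 5 / B ≤ 8 / B := by gcongr; norm_num
  have e5 : n * s + A / D ^ 2 * s = K * u.re + K * (a ^ 2 / 2) := by rw [hK, hs]; ring
  linarith

lemma exists_touch (f : ℂ → ℂ) (hf : Differentiable ℂ f) (n : ℕ) (hn : 1 ≤ n) (B M₀ : ℝ)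
    (hB : 8 ≤ B) (hM₀ : ∀ z : ℂ, ‖z‖ ≤ 1 → ‖f z‖ ≤ M₀) (hMB : M₀ ≤ Real.exp (B - 1))
    (z₁ : ℂ) (hz₁ : 1 ≤ ‖z₁‖)
    (hfz₁ : Real.exp B * ‖z₁‖ ^ n * Real.exp (B * Real.log ‖z₁‖) ≤ ‖f z₁‖) :
    ∃ (z₀ : ℂ) (K y : ℝ), 1 ≤ ‖z₀‖ ∧ B ≤ y ∧ ‖z₀‖ ^ n * Real.exp y ≤ ‖f z₀‖ ∧
      (n : ℝ) ≤ K ∧ K ≤ n + y ^ 2 ∧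
      ∀ w : ℂ, ‖w / z₀‖ * K < 1 → ‖f (z₀ + w)‖ ≤
        ‖f z₀‖ * Real.exp (K * (w / z₀).re) * Real.exp (1 / (2 * n) + 8 / B) := by
  set ρ := Real.log ‖z₁‖ with hρ
  have hρ0 : 0 ≤ ρ := Real.log_nonneg hz₁
  have hz₁0 : 0 < ‖z₁‖ := by linarith
  have hf1 : 0 < ‖f z₁‖ := lt_of_lt_of_le (by positivity) hfz₁
  have hn' : (1 : ℝ) ≤ n := by exact_mod_cast hn
  obtain ⟨A, hA⟩ : ∃ A, A = Real.log ‖f z₁‖ - n * ρ := ⟨_, rfl⟩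
  obtain ⟨R, hR⟩ : ∃ R, R = ρ + 1 := ⟨_, rfl⟩
  have hfA : ‖f z₁‖ = ‖z₁‖ ^ n * Real.exp A := by
    rw [hA, Real.exp_sub, Real.exp_log hf1, Real.exp_nat_mul, hρ, Real.exp_log hz₁0]
    field_simp
  have hAB : B * (ρ + 1) ≤ A := by
    rw [hfA] at hfz₁
    have : Real.exp (B * (ρ + 1)) ≤ Real.exp A := by
      rw [mul_add, Real.exp_add, mul_one]
      have hp : 0 < ‖z₁‖ ^ n := by positivity
      refine le_of_mul_le_mul_left ?_ hp
      linarith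
    exact Real.exp_le_exp.1 this
  have hA0 : 0 < A := by nlinarith
  set G : ℂ → ℝ := fun z => ‖f z‖ / ‖z‖ ^ n * expNegInvGlue ((R - Real.log ‖z‖) / A) with hG
  have hcomp : IsCompact (Metric.closedBall (0:ℂ) (Real.exp R) ∩ {z | 1 ≤ ‖z‖}) :=
    (isCompact_closedBall _ _).inter_right (isClosed_le continuous_const continuous_norm)
  have hcont : ContinuousOn G (Metric.closedBall (0:ℂ) (Real.exp R) ∩ {z | 1 ≤ ‖z‖}) := by
    have hne : ∀ z ∈ Metric.closedBall (0:ℂ) (Real.exp R) ∩ {z | 1 ≤ ‖z‖}, ‖z‖ ≠ 0 := by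
      rintro z ⟨_, hz⟩
      have : 1 ≤ ‖z‖ := hz
      linarith
    have h1 : ContinuousOn (fun z : ℂ => Real.log ‖z‖)
        (Metric.closedBall (0:ℂ) (Real.exp R) ∩ {z | 1 ≤ ‖z‖}) :=
      ContinuousOn.log continuous_norm.continuousOn hne
    have hfc := hf.continuous
    refine ContinuousOn.mul (ContinuousOn.div (by fun_prop) (by fun_prop)
      fun z hz => pow_ne_zero _ (hne z hz)) ?_
    have hglue : Continuous expNegInvGlue := (expNegInvGlue.contDiff (n := 0)).continuous
    exact hglue.comp_continuousOn ((continuousOn_const.sub h1).div_const _)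
  have hz₁mem : z₁ ∈ Metric.closedBall (0:ℂ) (Real.exp R) ∩ {z | 1 ≤ ‖z‖} := by
    refine ⟨?_, hz₁⟩
    simp only [Metric.mem_closedBall, dist_zero_right]
    rw [← Real.log_le_iff_le_exp hz₁0]
    linarith
  obtain ⟨z₀, ⟨hz₀R, hz₀1⟩, hmax⟩ := hcomp.exists_isMaxOn ⟨z₁, hz₁mem⟩ hcont
  have hz₀1 : 1 ≤ ‖z₀‖ := hz₀1
  have hz₀0 : 0 < ‖z₀‖ := by linarith
  have hglue : ∀ t, 0 < t → expNegInvGlue (t / A) = Real.exp (-(A / t)) := by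
    intro t ht
    have : ¬ (t / A ≤ 0) := by push Not; positivity
    rw [expNegInvGlue, if_neg this, inv_div]
  have hG1 : G z₁ = 1 := by
    have : R - Real.log ‖z₁‖ = 1 := by rw [hR, hρ]; ring
    simp only [hG]
    rw [this, hglue 1 one_pos, hfA, div_one, Real.exp_neg]
    have := Real.exp_pos A
    field_simp
  have hG0 : 1 ≤ G z₀ := by rw [← hG1]; exact hmax hz₁mem
  obtain ⟨D, hD⟩ : ∃ D, D = R - Real.log ‖z₀‖ := ⟨_, rfl⟩
  have hD0 : 0 < D := by
    by_contra hcon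
    have : (R - Real.log ‖z₀‖) / A ≤ 0 :=
      div_nonpos_of_nonpos_of_nonneg (by linarith) hA0.le
    simp only [hG] at hG0
    rw [expNegInvGlue.zero_of_nonpos this] at hG0
    norm_num at hG0
  have hlog0 : 0 ≤ Real.log ‖z₀‖ := Real.log_nonneg hz₀1
  have hG0' : G z₀ = ‖f z₀‖ / ‖z₀‖ ^ n * Real.exp (-(A / D)) := by
    simp only [hG]
    rw [← hD, hglue D hD0]
  have hBy : B ≤ A / D := by
    rw [le_div_iff₀ hD0]
    nlinarith
  have hfz₀ : ‖z₀‖ ^ n * Real.exp (A / D) ≤ ‖f z₀‖ := by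
    rw [hG0', Real.exp_neg, ← div_eq_mul_inv, le_div_iff₀ (Real.exp_pos _),
      le_div_iff₀ (by positivity)] at hG0
    linarith
  refine ⟨z₀, n + A / D ^ 2, A / D, hz₀1, hBy, hfz₀, ?_, ?_, ?_⟩
  · have : 0 < A / D ^ 2 := by positivity
    linarith
  · have : A / D ^ 2 ≤ (A / D) ^ 2 := by
      have hA1 : 1 ≤ A := by nlinarith
      have hA2 : A ≤ A ^ 2 := by nlinarith
      rw [div_pow]
      gcongr
    linarith
  · intro w hw
    set u := w / z₀ with hu
    have hz₀ne : z₀ ≠ 0 := norm_pos_iff.1 hz₀0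
    have hwu : z₀ + w = z₀ * (1 + u) := by rw [hu]; field_simp
    obtain ⟨hs1, hs2⟩ := weight_est n B A D _ u hn' hB hD0 hBy rfl hw
    obtain ⟨K, hK⟩ : ∃ K, K = n + A / D ^ 2 := ⟨_, rfl⟩
    rw [← hK] at hw hs2 ⊢
    have hK0 : 0 < K := by rw [hK]; positivity
    set s := u.re + ‖u‖ ^ 2 / 2 with hs
    set δ := 1 / (2 * (n:ℝ)) + 8 / B with hδ
    have hδ0 : 0 ≤ δ := by positivity
    rcases le_total ‖z₀ + w‖ 1 with hle | hge
    · have h1 : -1 ≤ K * u.re := by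
        have := (abs_le.1 (Complex.abs_re_le_norm u)).1
        nlinarith
      calc ‖f (z₀ + w)‖ ≤ M₀ := hM₀ _ hle
        _ ≤ Real.exp (B - 1) := hMB
        _ ≤ Real.exp (A / D + K * u.re + δ) := Real.exp_le_exp.2 (by linarith)
        _ = 1 * Real.exp (A / D) * Real.exp (K * u.re) * Real.exp δ := by
          rw [Real.exp_add, Real.exp_add, one_mul]
        _ ≤ ‖z₀‖ ^ n * Real.exp (A / D) * Real.exp (K * u.re) * Real.exp δ := by
          gcongr
          exact one_le_pow₀ hz₀1
        _ ≤ _ := by gcongr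
    · have hw0 : 0 < ‖z₀ + w‖ := by linarith
      have h1u : 0 < ‖1 + u‖ := by
        rw [hwu, norm_mul] at hw0
        exact pos_of_mul_pos_right hw0 hz₀0.le
      have hlog : Real.log ‖z₀ + w‖ ≤ Real.log ‖z₀‖ + s := by
        rw [hwu, norm_mul, Real.log_mul hz₀0.ne' h1u.ne']
        have h2 : Real.log (‖1 + u‖ ^ 2) ≤ ‖1 + u‖ ^ 2 - 1 :=
          Real.log_le_sub_one_of_pos (by positivity)
        rw [Real.log_pow] at h2
        have h3 : ‖1 + u‖ ^ 2 = 1 + 2 * u.re + ‖u‖ ^ 2 := by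
          rw [← Complex.normSq_eq_norm_sq, ← Complex.normSq_eq_norm_sq, Complex.normSq_apply,
            Complex.normSq_apply]
          simp
          ring
        push_cast at h2
        rw [hs]
        linarith
      obtain ⟨D', hD'⟩ : ∃ D', D' = R - Real.log ‖z₀ + w‖ := ⟨_, rfl⟩
      have hDD : D - s ≤ D' := by linarith
      have hDs : 0 < D - s := by linarith
      have hD'0 : 0 < D' := by linarith
      have hmem : z₀ + w ∈ Metric.closedBall (0:ℂ) (Real.exp R) ∩ {z | 1 ≤ ‖z‖} := by
        refine ⟨?_, hge⟩
        simp only [Metric.mem_closedBall, dist_zero_right]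
        rw [← Real.log_le_iff_le_exp hw0]
        linarith
      have hm : G (z₀ + w) ≤ G z₀ := hmax hmem
      have hGw : G (z₀ + w) = ‖f (z₀ + w)‖ / ‖z₀ + w‖ ^ n * Real.exp (-(A / D')) := by
        simp only [hG]
        rw [← hD', hglue D' hD'0]
      have hlogexp : ∀ x : ℝ, 0 < x → x ^ n = Real.exp (n * Real.log x) := by
        intro x hx
        rw [Real.exp_nat_mul, Real.exp_log hx]
      rw [hGw, hG0', hlogexp _ hw0, hlogexp _ hz₀0, div_eq_mul_inv ‖f (z₀ + w)‖,
        div_eq_mul_inv ‖f z₀‖, ← Real.exp_neg, ← Real.exp_neg, mul_assoc, mul_assoc, ← Real.exp_add, ← Real.exp_add] at hm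
      have hAD' : A / D' ≤ A / (D - s) := by gcongr
      have hnl : n * Real.log ‖z₀ + w‖ ≤ n * Real.log ‖z₀‖ + n * s := by
        rw [← mul_add]; gcongr
      set E := -(n * Real.log ‖z₀ + w‖) + -(A / D') with hE
      have h5 : ‖f (z₀ + w)‖ = ‖f (z₀ + w)‖ * Real.exp E * Real.exp (-E) := by
        rw [mul_assoc, ← Real.exp_add]; simp
      rw [h5]
      calc _ ≤ _ := mul_le_mul_of_nonneg_right hm (Real.exp_pos _).le
        _ = ‖f z₀‖ * Real.exp (-(n * Real.log ‖z₀‖) + -(A / D) + -E) := by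
          rw [mul_assoc, ← Real.exp_add]
        _ ≤ ‖f z₀‖ * Real.exp (K * u.re + δ) := by
          refine mul_le_mul_of_nonneg_left (Real.exp_le_exp.2 ?_) (norm_nonneg _)
          rw [hE]
          linarith
        _ = _ := by rw [Real.exp_add, mul_assoc]

/-- Let `k` and `d` be integers with `d > 1` and let `j_1, …, j_d` be
integers with `0 ≤ j_i < k`. If `f : ℂ → ℂ` is entire and satisfies
`f^{(k)}(z) = f^{(j_1)}(z) ⋯ f^{(j_d)}(z)` for all `z ∈ ℂ`, then `f` is a polynomial. -/
theorem entire_solution_is_polynomial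
    (k d : ℕ) (hd : 1 < d) (j : Fin d → ℕ) (hj : ∀ i, j i < k)
    (f : ℂ → ℂ) (hf : Differentiable ℂ f)
    (heq : ∀ z : ℂ, iteratedDeriv k f z = ∏ i : Fin d, iteratedDeriv (j i) f z) :
    ∃ p : Polynomial ℂ, ∀ z : ℂ, f z = p.eval z := by
  by_contra hnp
  set S := ∑ i, j i with hS
  obtain ⟨c, hc⟩ : ∃ c : ℕ, c = k.factorial * 2 ^ k := ⟨_, rfl⟩
  have hc1 : 1 ≤ c := by rw [hc]; exact Nat.mul_pos (Nat.factorial_pos _) (by positivity)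
  have hc1' : (1 : ℝ) ≤ c := by exact_mod_cast hc1
  obtain ⟨n, hn⟩ : ∃ n : ℕ, n = 24 * c + S := ⟨_, rfl⟩
  have hn1 : 1 ≤ n := by omega
  have hnc : (24 * c : ℝ) ≤ n := by rw [hn]; push_cast; linarith [(Nat.cast_nonneg S : (0:ℝ) ≤ S)]
  obtain ⟨M₀, hM₀⟩ : ∃ M₀ : ℝ, ∀ z : ℂ, ‖z‖ ≤ 1 → ‖f z‖ ≤ M₀ := by
    obtain ⟨M, hM⟩ := (isCompact_closedBall (0:ℂ) 1).exists_bound_of_continuousOn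
      hf.continuous.continuousOn
    exact ⟨M, fun z hz => hM z (by simpa using hz)⟩
  have ev1 : ∀ᶠ y : ℝ in Filter.atTop, 2 ^ (d + 1) * (n + 1 : ℝ) ^ k < Real.exp y / y ^ (2 * k) :=
    (Real.tendsto_exp_div_pow_atTop (2 * k)).eventually_gt_atTop _
  obtain ⟨Y, hY⟩ := Filter.eventually_atTop.1 ev1
  have ev2 : ∀ᶠ y : ℝ in Filter.atTop, M₀ ≤ Real.exp (y - 1) :=
    (Real.tendsto_exp_atTop.comp
      (Filter.tendsto_atTop_add_const_right _ (-1) Filter.tendsto_id)).eventually_ge_atTop M₀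
  obtain ⟨b, hb1, hb2, hb3⟩ := ((ev2.and ((Filter.eventually_ge_atTop Y).and
    (Filter.eventually_ge_atTop (384 * c : ℝ)))).natCast_atTop).exists
  -- large values of f
  obtain ⟨z₁, hz₁, hfz₁⟩ : ∃ z₁ : ℂ, 1 ≤ ‖z₁‖ ∧ Real.exp b * ‖z₁‖ ^ (n + b) < ‖f z₁‖ := by
    by_contra hcon
    push Not at hcon
    exact hnp (poly_of_growth f hf _ _ hcon)
  obtain ⟨z₀, K, y, hz₀, hy, hfz₀, hnK, hKy, hloc⟩ := exists_touch f hf n hn1 b M₀ (by linarith)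
    hM₀ hb1 z₁ hz₁ (by
      rw [Real.exp_nat_mul (Real.log ‖z₁‖) b, Real.exp_log (by linarith), mul_assoc, ← pow_add]
      exact hfz₁.le)
  have hz₀0 : 0 < ‖z₀‖ := by linarith
  have hz₀ne : z₀ ≠ 0 := norm_pos_iff.1 hz₀0
  have hK1 : 1 ≤ K := by linarith
  have hK0 : 0 < K := by linarith
  have hFy : Real.exp y ≤ ‖f z₀‖ := by
    refine le_trans ?_ hfz₀
    exact le_mul_of_one_le_left (Real.exp_pos _).le (one_le_pow₀ hz₀)
  have hy0 : 384 ≤ y := by linarith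
  have hF1 : 1 ≤ ‖f z₀‖ := (Real.one_le_exp (by linarith)).trans hFy
  have hf0 : f z₀ ≠ 0 := norm_pos_iff.1 (by linarith)
  obtain ⟨x, hx⟩ : ∃ x : ℝ, x = 1 / (2 * n) + 8 / b := ⟨_, rfl⟩
  rw [← hx] at hloc
  have hn0 : (0:ℝ) < n := by linarith
  have hb0 : (0:ℝ) < b := by linarith
  have hx0 : 0 < x := by rw [hx]; positivity
  have hxc : x * (24 * c) ≤ 1 := by
    have h1 : 1 / (2 * (n:ℝ)) ≤ 1 / (48 * c) := one_div_le_one_div_of_le (by positivity) (by linarith)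
    have h2 : 8 / (b:ℝ) ≤ 8 / (384 * c) := by gcongr
    have h3 : x ≤ 1 / (24 * c) := by
      rw [hx]
      refine (add_le_add h1 h2).trans (le_of_eq ?_)
      field_simp
      norm_num
    rwa [le_div_iff₀ (by positivity)] at h3
  have hx1 : x ≤ 1 := by nlinarith
  have hexp : Real.exp x - 1 ≤ 2 * x := by
    have := Real.abs_exp_sub_one_le (x := x) (by rw [abs_of_pos hx0]; exact hx1)
    rw [abs_of_pos hx0] at this
    exact (le_abs_self _).trans this
  have hMpos : 0 < Real.exp x - 1 := by linarith [Real.add_one_lt_exp hx0.ne']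
  obtain ⟨κ, hκ⟩ : ∃ κ : ℂ, κ = K / z₀ := ⟨_, rfl⟩
  have hκn : ‖κ‖ = K / ‖z₀‖ := by
    rw [hκ, norm_div, Complex.norm_real, Real.norm_of_nonneg hK0.le]
  have hκ0 : 0 < ‖κ‖ := by rw [hκn]; positivity
  have key : ∀ i ≤ k, ‖iteratedDeriv i f z₀ - f z₀ * κ ^ i‖ ≤ 1 / 2 * (‖f z₀‖ * ‖κ‖ ^ i) := by
    intro i hi
    refine (local_est f hf z₀ κ (Real.exp x - 1) hMpos hf0 (norm_pos_iff.1 hκ0) ?_ i).trans ?_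
    · intro w hw
      have h1 : ‖w / z₀‖ * K < 1 := by
        rw [norm_div]
        rw [hκn] at hw
        calc ‖w‖ / ‖z₀‖ * K = ‖w‖ * (K / ‖z₀‖) := by ring
          _ < 1 := hw
      have h2 := hloc w h1
      have h3 : (κ * w).re = K * (w / z₀).re := by
        rw [hκ, div_mul_eq_mul_div, mul_div_assoc, Complex.re_ofReal_mul]
      rw [h3]
      simpa using h2
    · have h1 : (i.factorial * 2 ^ i : ℝ) ≤ c := by
        have : i.factorial * 2 ^ i ≤ c := by
          rw [hc]
          exact Nat.mul_le_mul (Nat.factorial_le hi) (Nat.pow_le_pow_right (by norm_num) hi)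
        exact_mod_cast this
      gcongr
      calc (i.factorial * 2 ^ i : ℝ) * (6 * (Real.exp x - 1)) ≤ c * (6 * (2 * x)) := by gcongr
        _ ≤ 1 / 2 := by linarith
  have nm : ∀ i, ‖f z₀ * κ ^ i‖ = ‖f z₀‖ * ‖κ‖ ^ i := by intro i; rw [norm_mul, norm_pow]
  have up : ‖iteratedDeriv k f z₀‖ ≤ 3 / 2 * (‖f z₀‖ * ‖κ‖ ^ k) := by
    have h1 := key k le_rfl
    have h2 := norm_sub_norm_le (iteratedDeriv k f z₀) (f z₀ * κ ^ k)
    rw [nm] at h2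
    linarith
  have low : ∀ i ≤ k, 1 / 2 * (‖f z₀‖ * ‖κ‖ ^ i) ≤ ‖iteratedDeriv i f z₀‖ := by
    intro i hi
    have h1 := key i hi
    have h2 := norm_sub_norm_le (f z₀ * κ ^ i) (iteratedDeriv i f z₀)
    rw [nm, norm_sub_rev] at h2
    linarith
  have hprod : (1 / 2 : ℝ) ^ d * (‖f z₀‖ ^ d * ‖κ‖ ^ S) ≤ 3 / 2 * (‖f z₀‖ * ‖κ‖ ^ k) := by
    refine le_trans ?_ up
    rw [heq, norm_prod]
    calc (1 / 2 : ℝ) ^ d * (‖f z₀‖ ^ d * ‖κ‖ ^ S)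
        = ∏ i, (1 / 2 * (‖f z₀‖ * ‖κ‖ ^ j i)) := by
          rw [Finset.prod_mul_distrib, Finset.prod_mul_distrib, Finset.prod_pow_eq_pow_sum]
          simp [hS]
      _ ≤ _ := Finset.prod_le_prod (fun i _ => by positivity) fun i _ => low _ (hj i).le
  set F := ‖f z₀‖ with hF
  set r := ‖z₀‖ with hr
  have hF0 : 0 < F := by linarith
  have h2 : F * F ≤ F ^ d := by
    rw [← sq]; exact pow_le_pow_right₀ hF1 hd
  have h3 : (1 / 2 : ℝ) ^ d * (F * ‖κ‖ ^ S) ≤ 3 / 2 * ‖κ‖ ^ k := by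
    refine le_of_mul_le_mul_left ?_ hF0
    calc F * ((1 / 2 : ℝ) ^ d * (F * ‖κ‖ ^ S)) = (1 / 2 : ℝ) ^ d * ((F * F) * ‖κ‖ ^ S) := by ring
      _ ≤ (1 / 2 : ℝ) ^ d * (F ^ d * ‖κ‖ ^ S) := by gcongr
      _ ≤ _ := hprod
      _ = _ := by ring
  have h4 : F ≤ 2 ^ (d + 1) * K ^ k * r ^ S := by
    rw [hκn, div_pow K r S, div_pow K r k, one_div, inv_pow] at h3
    have h5 : F * (K ^ S * r ^ k) ≤ 2 ^ d * (3 / 2) * (K ^ k * r ^ S) := by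
      have h6 := mul_le_mul_of_nonneg_left h3 (show 0 ≤ 2 ^ d * (r ^ S * r ^ k) by positivity)
      calc F * (K ^ S * r ^ k)
          = 2 ^ d * (r ^ S * r ^ k) * ((2 ^ d)⁻¹ * (F * (K ^ S / r ^ S))) := by
            field_simp
        _ ≤ _ := h6
        _ = 2 ^ d * (3 / 2) * (K ^ k * r ^ S) := by field_simp
    calc F = F * (1 * 1) := by ring
      _ ≤ F * (K ^ S * r ^ k) := by
        gcongr
        · exact one_le_pow₀ hK1
        · exact one_le_pow₀ hz₀
      _ ≤ _ := h5
      _ ≤ 2 ^ d * 2 * (K ^ k * r ^ S) := by gcongr; norm_num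
      _ = _ := by ring
  have h5 : Real.exp y ≤ 2 ^ (d + 1) * K ^ k := by
    have h6 : r ^ S ≤ r ^ n := pow_le_pow_right₀ hz₀ (by omega)
    have hrS : 0 < r ^ S := by positivity
    refine le_of_mul_le_mul_right ?_ hrS
    calc Real.exp y * r ^ S ≤ Real.exp y * r ^ n := by gcongr
      _ ≤ F := by linarith
      _ ≤ _ := h4
  have h6 := hY y (by linarith)
  rw [lt_div_iff₀ (by positivity)] at h6
  have h7 : K ≤ (n + 1) * y ^ 2 := by
    have hy1 : 1 ≤ y ^ 2 := by nlinarith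
    have := mul_le_mul_of_nonneg_left hy1 hn0.le
    linarith
  have h8 : K ^ k ≤ (n + 1 : ℝ) ^ k * y ^ (2 * k) := by
    rw [pow_mul, ← mul_pow]; gcongr
  have h9 : 2 ^ (d + 1) * K ^ k ≤ 2 ^ (d + 1) * ((n + 1 : ℝ) ^ k * y ^ (2 * k)) := by gcongr
  linarith
end

section
/- Let k, d, m be positive integers with d > 1, let j_1, …, j_d be integers with 0 ≤ j_i < k, and suppose k + m = Σ_{i=1}^{d} (j_i + m). Let c : ℕ → ℂ satisfy c(0) ≠ 0, c(0)^{d−1} = (−m)_k / ((−m)_{j_1} ⋯ (−m)_{j_d}), and, for every integer n ≥ 1, the recursion (n−m)_k · c(n) = Σ (n_1−m)_{j_1} ⋯ (n_d−m)_{j_d} · c(n_1) ⋯ c(n_d), the sum over all d-tuples of nonnegative integers (n_1, …, n_d) with n_1 + ⋯ + n_d = n. If the associated polynomial p has no positive integer root, then c(n) = 0 for every n ≥ 1. If p has at least one positive integer root and q denotes the greatest common divisor of the positive integer roots of p, then c(n) = 0 for every n ≥ 1 that is not divisible by q. -/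
noncomputable section

/-- The falling factorial `(x)_j = x (x-1) ⋯ (x-j+1)`, with `(x)_0 = 1`. -/
def fall (x : ℤ) (j : ℕ) : ℤ := ∏ i ∈ Finset.range j, (x - (i : ℤ))

/-- The polynomial `p(x) = (x-m)_k - ∑_{i=1}^d (-1)^{k-jᵢ} (k+m-1)_{k-jᵢ} (x-m)_{jᵢ}`
associated to the differential equation `f⁽ᵏ⁾ = f⁽ʲ¹⁾ ⋯ f⁽ʲᵈ⁾` and the multiplicity `m`. -/
def assocPoly (k m d : ℕ) (j : Fin d → ℕ) (x : ℤ) : ℤ :=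
  fall (x - (m : ℤ)) k -
    ∑ i : Fin d, (-1 : ℤ) ^ (k - j i) * fall ((k : ℤ) + (m : ℤ) - 1) (k - j i)
      * fall (x - (m : ℤ)) (j i)

/-- `q` is the greatest common divisor of the positive integer roots of `p`. -/
def IsGcdOfPosRoots (p : ℤ → ℤ) (q : ℕ) : Prop :=
  (∀ r : ℕ, 0 < r → p (r : ℤ) = 0 → q ∣ r) ∧
    ∀ t : ℕ, (∀ r : ℕ, 0 < r → p (r : ℤ) = 0 → t ∣ r) → t ∣ q

theorem fall_neg_ne_zero (m : ℕ) (hm : 0 < m) (j : ℕ) : fall (-(m : ℤ)) j ≠ 0 := by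
  unfold fall
  rw [Finset.prod_ne_zero_iff]
  intro i _
  omega

theorem fall_neg_split (m a b : ℕ) :
    fall (-(m : ℤ)) (a + b) =
      fall (-(m : ℤ)) a * ((-1) ^ b * fall (((a + b : ℕ) : ℤ) + (m : ℤ) - 1) b) := by
  unfold fall
  rw [Finset.prod_range_add]
  congr 1
  rw [← Finset.prod_range_reflect]
  have hpow : (-1 : ℤ) ^ b = ∏ _i ∈ Finset.range b, (-1 : ℤ) := by simp
  rw [hpow, ← Finset.prod_mul_distrib]
  refine Finset.prod_congr rfl ?_
  intro i hi
  have := Finset.mem_range.mp hi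
  push_cast
  have h : ((b - 1 - i : ℕ) : ℤ) = b - 1 - i := by omega
  rw [h]
  ring

theorem key_vanish
    (k d m : ℕ) (hd : 1 < d) (hm : 0 < m)
    (j : Fin d → ℕ) (hj : ∀ i, j i < k)
    (c : ℕ → ℂ) 
    (hinit : c 0 ^ (d - 1) =
      (fall (-(m : ℤ)) k : ℂ) / ∏ i : Fin d, (fall (-(m : ℤ)) (j i) : ℂ))
    (hrec : ∀ n : ℕ, 1 ≤ n →
      (fall ((n : ℤ) - (m : ℤ)) k : ℂ) * c n =
        ∑ t ∈ Finset.Nat.antidiagonalTuple d n,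
          ∏ i : Fin d, (fall ((t i : ℤ) - (m : ℤ)) (j i) : ℂ) * c (t i))
    (q : ℕ) (hq : ∀ r : ℕ, 0 < r → assocPoly k m d j (r : ℤ) = 0 → q ∣ r) (n : ℕ) :
    ¬ q ∣ n → c n = 0 := by
  induction n using Nat.strong_induction_on with
  | _ n ih =>
  intro hqn
  have hn : 0 < n := by
    rcases Nat.eq_zero_or_pos n with h | h
    · exact absurd (h ▸ dvd_zero q) hqn
    · exact h
  have hinj : Function.Injective (fun i : Fin d => (Pi.single i n : Fin d → ℕ)) := by
    intro a b hab
    by_contra hne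
    have := congrFun hab a
    simp [Pi.single_apply, hne] at this
    omega
  have h1 := hrec n hn
  have hsub : Finset.univ.image (fun i : Fin d => (Pi.single i n : Fin d → ℕ)) ⊆
      Finset.Nat.antidiagonalTuple d n := by
    intro t ht
    simp only [Finset.mem_image, Finset.mem_univ, true_and] at ht
    obtain ⟨i, rfl⟩ := ht
    rw [Finset.Nat.mem_antidiagonalTuple]
    simp
  rw [← Finset.sum_subset hsub, Finset.sum_image (fun a _ b _ h => hinj h)] at h1
  · have h2 : ∀ i : Fin d, (∏ l : Fin d,
        (fall ((((Pi.single i n : Fin d → ℕ) l : ℕ) : ℤ) - (m : ℤ)) (j l) : ℂ)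
          * c ((Pi.single i n : Fin d → ℕ) l)) =
        ((((-1 : ℤ) ^ (k - j i) * fall ((k : ℤ) + (m : ℤ) - 1) (k - j i)
          * fall ((n : ℤ) - (m : ℤ)) (j i) : ℤ)) : ℂ) * c n := by
      intro i
      have hprod : ∏ l ∈ Finset.univ.erase i,
          (fall ((((Pi.single i n : Fin d → ℕ) l : ℕ) : ℤ) - (m : ℤ)) (j l) : ℂ)
          * c ((Pi.single i n : Fin d → ℕ) l) =
          (∏ l ∈ Finset.univ.erase i, (fall (-(m : ℤ)) (j l) : ℂ)) * c 0 ^ (d - 1) := by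
        have hcard : (Finset.univ.erase i).card = d - 1 := by
          simp [Finset.card_erase_of_mem]
        rw [← hcard, ← Finset.prod_const, ← Finset.prod_mul_distrib]
        refine Finset.prod_congr rfl ?_
        intro l hl
        have hl' : l ≠ i := (Finset.mem_erase.mp hl).1
        simp [Pi.single_apply, hl']
      rw [← Finset.mul_prod_erase _ _ (Finset.mem_univ i), hprod, hinit,
        ← Finset.mul_prod_erase _ (fun l => (fall (-(m : ℤ)) (j l) : ℂ)) (Finset.mem_univ i)]
      have hs := fall_neg_split m (j i) (k - j i)
      rw [Nat.add_sub_cancel' (hj i).le] at hs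
      rw [hs]
      have hA : (fall (-(m : ℤ)) (j i) : ℂ) ≠ 0 := by
        exact_mod_cast fall_neg_ne_zero m hm (j i)
      have hB : (∏ l ∈ Finset.univ.erase i, (fall (-(m : ℤ)) (j l) : ℂ)) ≠ 0 := by
        rw [Finset.prod_ne_zero_iff]
        intro l _
        exact_mod_cast fall_neg_ne_zero m hm (j l)
      simp only [Pi.single_eq_same]
      push_cast
      field_simp
    rw [Finset.sum_congr rfl (fun i _ => h2 i), ← Finset.sum_mul, ← sub_eq_zero,
      ← sub_mul] at h1
    rcases mul_eq_zero.mp h1 with h | h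
    · exfalso
      apply hqn
      apply hq n hn
      unfold assocPoly
      exact_mod_cast h
    · exact h
  · intro t ht hnt
    rw [Finset.Nat.mem_antidiagonalTuple] at ht
    have hex : ∃ i, ¬ q ∣ t i := by
      by_contra! hall
      exact hqn (ht ▸ Finset.dvd_sum (fun i _ => hall i))
    obtain ⟨i, hi⟩ := hex
    have hsplit := Finset.add_sum_erase Finset.univ t (Finset.mem_univ i)
    have hlt : t i < n := by
      by_contra hge
      apply hnt
      simp only [Finset.mem_image, Finset.mem_univ, true_and]
      refine ⟨i, ?_⟩
      have h0 : ∑ l ∈ Finset.univ.erase i, t l = 0 := by omega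
      have hti : t i = n := by omega
      rw [Finset.sum_eq_zero_iff] at h0
      funext l
      by_cases hl : l = i
      · subst hl; simp [hti]
      · simp [Pi.single_apply, hl, h0 l (by simp [hl])]
    apply Finset.prod_eq_zero (Finset.mem_univ i)
    rw [ih _ hlt hi, mul_zero]

/-- The coefficients of a formal Laurent series solution of
`f⁽ᵏ⁾ = f⁽ʲ¹⁾ ⋯ f⁽ʲᵈ⁾` with a pole of multiplicity `m` vanish in degrees prescribed by the
positive integer roots of the associated polynomial. -/
theorem laurent_coefficients_vanish
    (k d m : ℕ) (hk : 0 < k) (hd : 1 < d) (hm : 0 < m)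
    (j : Fin d → ℕ) (hj : ∀ i, j i < k)
    (hsum : k + m = ∑ i : Fin d, (j i + m))
    (c : ℕ → ℂ) (hc0 : c 0 ≠ 0)
    (hinit : c 0 ^ (d - 1) =
      (fall (-(m : ℤ)) k : ℂ) / ∏ i : Fin d, (fall (-(m : ℤ)) (j i) : ℂ))
    (hrec : ∀ n : ℕ, 1 ≤ n →
      (fall ((n : ℤ) - (m : ℤ)) k : ℂ) * c n =
        ∑ t ∈ Finset.Nat.antidiagonalTuple d n,
          ∏ i : Fin d, (fall ((t i : ℤ) - (m : ℤ)) (j i) : ℂ) * c (t i)) :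
    ((∀ r : ℕ, 0 < r → assocPoly k m d j (r : ℤ) ≠ 0) → ∀ n : ℕ, 1 ≤ n → c n = 0) ∧
      ((∃ r : ℕ, 0 < r ∧ assocPoly k m d j (r : ℤ) = 0) →
        ∀ q : ℕ, IsGcdOfPosRoots (assocPoly k m d j) q →
          ∀ n : ℕ, 1 ≤ n → ¬ q ∣ n → c n = 0) := by
  refine ⟨fun h n hn => ?_, fun _ q hq n _ hqn => ?_⟩
  · exact key_vanish k d m hd hm j hj c hinit hrec 0 (fun r hr h0 => absurd h0 (h r hr)) n
      (by rw [zero_dvd_iff]; omega)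
  · exact key_vanish k d m hd hm j hj c hinit hrec q hq.1 n hqn
end
end

section
/- Let k, d, m be positive integers with d > 1, let j_1, …, j_d be integers with 0 ≤ j_i < k, and suppose k + m = Σ_{i=1}^{d} (j_i + m). Then every positive integer root r of the associated polynomial p satisfies r ≥ m; moreover p(m) = 0 if and only if j_i ≥ 1 for every i (i.e. no j_i equals 0). -/
noncomputable section

theorem aux_neg (s : ℤ) (j : ℕ) :
    fall (-s) j = (-1) ^ j * ∏ i ∈ Finset.range j, (s + (i : ℤ)) := by
  unfold fall
  induction j with
  | zero => simp
  | succ n ih => rw [Finset.prod_range_succ, Finset.prod_range_succ, ih]; ring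

theorem aux_reflect (m j n : ℕ) :
    fall (((j + n : ℕ) : ℤ) + (m : ℤ) - 1) n
      = ∏ i ∈ Finset.range n, ((m : ℤ) + ((j + i : ℕ) : ℤ)) := by
  unfold fall
  rw [← Finset.prod_range_reflect]
  apply Finset.prod_congr rfl
  intro i hi
  have := Finset.mem_range.mp hi
  push_cast
  omega

theorem aux_lt (k m j : ℕ) (s : ℤ) (hs : 0 < s) (hsm : s < m) (hj : j < k) :
    ∏ i ∈ Finset.range k, (s + (i : ℤ)) <
      fall ((k : ℤ) + (m : ℤ) - 1) (k - j) * ∏ i ∈ Finset.range j, (s + (i : ℤ)) := by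
  obtain ⟨n, rfl⟩ := Nat.exists_eq_add_of_lt hj
  have e : j + n + 1 - j = n + 1 := by omega
  rw [e, show j + n + 1 = j + (n + 1) by omega, aux_reflect, Finset.prod_range_add, mul_comm]
  apply mul_lt_mul_of_pos_right
  · apply Finset.prod_lt_prod_of_nonempty
    · intro i _; positivity
    · intro i _; linarith
    · simp
  · apply Finset.prod_pos
    intro i _; positivity

theorem aux_zero (j : ℕ) : fall 0 j = if j = 0 then 1 else 0 := by
  unfold fall
  cases j with
  | zero => simp
  | succ n => rw [Finset.prod_range_succ']; simp

/-- Every positive integer root `r` of the associated polynomial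
satisfies `r ≥ m`; and `p(m) = 0` if and only if no `jᵢ` equals `0`. -/
theorem roots_ge_m_and_root_at_m_iff
    (k d m : ℕ) (hk : 0 < k) (hd : 1 < d) (hm : 0 < m)
    (j : Fin d → ℕ) (hj : ∀ i, j i < k)
    (hsum : k + m = ∑ i : Fin d, (j i + m)) :
    (∀ r : ℕ, 0 < r → assocPoly k m d j (r : ℤ) = 0 → m ≤ r) ∧
      (assocPoly k m d j (m : ℤ) = 0 ↔ ∀ i, 1 ≤ j i) := by
  constructor
  · intro r hr h0
    by_contra hlt
    push Not at hlt
    obtain ⟨s, hs⟩ : ∃ s : ℤ, s = (m : ℤ) - r := ⟨_, rfl⟩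
    have hs0 : 0 < s := by omega
    have hsm : s < m := by omega
    have hx : (r : ℤ) - m = -s := by omega
    unfold assocPoly at h0
    rw [hx, aux_neg] at h0
    have hterm : ∀ i : Fin d, (-1 : ℤ) ^ (k - j i) * fall ((k : ℤ) + (m : ℤ) - 1) (k - j i)
        * fall (-s) (j i) = (-1) ^ k * (fall ((k : ℤ) + (m : ℤ) - 1) (k - j i)
          * ∏ a ∈ Finset.range (j i), (s + (a : ℤ))) := by
      intro i
      rw [aux_neg]
      have : (-1 : ℤ) ^ k = (-1) ^ (k - j i) * (-1) ^ (j i) := by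
        rw [← pow_add, Nat.sub_add_cancel (hj i).le]
      rw [this]; ring
    rw [Finset.sum_congr rfl (fun i _ => hterm i), ← Finset.mul_sum, ← mul_sub] at h0
    have h1 := (mul_eq_zero.mp h0).resolve_left (by simp)
    have hP : 0 < ∏ i ∈ Finset.range k, (s + (i : ℤ)) :=
      Finset.prod_pos (fun i _ => by positivity)
    have hl := fun i => aux_lt k m (j i) s hs0 hsm (hj i)
    have h2 := Finset.single_le_sum (s := Finset.univ)
      (f := fun i : Fin d => fall ((k : ℤ) + (m : ℤ) - 1) (k - j i)
          * ∏ a ∈ Finset.range (j i), (s + (a : ℤ)))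
      (fun i _ => (hP.trans (hl i)).le) (Finset.mem_univ (⟨0, by omega⟩ : Fin d))
    have h3 := hl ⟨0, by omega⟩
    linarith
  · have hF : 0 < fall ((k : ℤ) + (m : ℤ) - 1) k := by
      apply Finset.prod_pos
      intro i hi
      have := Finset.mem_range.mp hi
      omega
    unfold assocPoly
    rw [sub_self, aux_zero, if_neg hk.ne']
    have hterm : ∀ i : Fin d, (-1 : ℤ) ^ (k - j i) * fall ((k : ℤ) + (m : ℤ) - 1) (k - j i)
        * fall 0 (j i) = (-1) ^ k * fall ((k : ℤ) + (m : ℤ) - 1) k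
          * (if j i = 0 then 1 else 0) := by
      intro i
      rw [aux_zero]
      split_ifs with h
      · rw [h, Nat.sub_zero]
      · simp
    rw [Finset.sum_congr rfl (fun i _ => hterm i), ← Finset.mul_sum, zero_sub, neg_eq_zero,
      mul_eq_zero, or_iff_right (mul_ne_zero (by simp) hF.ne'),
      Finset.sum_eq_zero_iff_of_nonneg (fun i _ => by split_ifs <;> simp)]
    simp [Nat.one_le_iff_ne_zero]
end
end

section
/- Let k, l, m be positive integers with k > l, let d > 1, and let j_1, …, j_d be integers with 0 ≤ j_i ≤ l for each i, satisfying k + m = Σ_{i=1}^{d} (j_i + m). Then every positive integer root r of the associated polynomial p satisfies r ≤ k + l + 2m; moreover p(k + l + 2m) = 0 if and only if k − l is even and j_i = l for every i. -/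
noncomputable section

theorem fall_pos_aux (x : ℤ) (n : ℕ) (h : (n : ℤ) ≤ x) : 0 < fall x n := by
  unfold fall
  apply Finset.prod_pos
  intro i hi
  have := Finset.mem_range.1 hi
  omega

theorem fall_add_aux (x : ℤ) (a b : ℕ) : fall x (a + b) = fall x a * fall (x - a) b := by
  unfold fall
  rw [Finset.prod_range_add]
  congr 1
  apply Finset.prod_congr rfl
  intro i _
  push_cast
  ring

theorem fall_lt_aux (x z : ℤ) (n : ℕ) (hn : 0 < n) (h : (n : ℤ) ≤ x) (hxz : x < z) :
    fall x n < fall z n := by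
  unfold fall
  apply Finset.prod_lt_prod_of_nonempty
  · intro i hi
    have := Finset.mem_range.1 hi
    omega
  · intro i hi
    omega
  · exact ⟨0, Finset.mem_range.2 hn⟩

theorem fall_shift_aux (x : ℤ) (n : ℕ) : x * fall (x - 1) n = fall x n * (x - n) := by
  have h1 := fall_add_aux x 1 n
  have h2 := fall_add_aux x n 1
  rw [add_comm 1 n] at h1
  have e : ∀ y, fall y 1 = y := by intro y; simp [fall]
  rw [e] at h1 h2
  push_cast at h1
  rw [← h1, h2]

/-- The basic estimate for one term, with its equality case. -/
theorem term_aux (k m j : ℕ) (y : ℤ) (hm : 0 < m) (hjk : j < k) (hy : (k : ℤ) + m + j ≤ y) :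
    (((k : ℤ) + m) * ((-1 : ℤ) ^ (k - j) * fall ((k : ℤ) + m - 1) (k - j) * fall y j)
      ≤ ((j : ℤ) + m) * fall y k) ∧
    (((k : ℤ) + m) * ((-1 : ℤ) ^ (k - j) * fall ((k : ℤ) + m - 1) (k - j) * fall y j)
      = ((j : ℤ) + m) * fall y k ↔ Even (k - j) ∧ y = (k : ℤ) + m + j) := by
  obtain ⟨n, rfl⟩ := Nat.exists_eq_add_of_lt hjk
  have hn : j + n + 1 - j = n + 1 := by omega
  rw [hn]
  have hy1 : ((n + 1 : ℕ) : ℤ) ≤ ((j + n + 1 : ℕ) : ℤ) + m := by push_cast; omega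
  have hs := fall_shift_aux (((j + n + 1 : ℕ) : ℤ) + m) (n + 1)
  have hsub : ((j + n + 1 : ℕ) : ℤ) + m - ((n + 1 : ℕ) : ℤ) = j + m := by push_cast; ring
  rw [hsub] at hs
  have ha := fall_add_aux y j (n + 1)
  rw [← add_assoc] at ha
  have hB := fall_pos_aux y j (by push_cast at hy; omega)
  have hA := fall_pos_aux _ _ hy1
  have hmono := fall_lt_aux (((j + n + 1 : ℕ) : ℤ) + m) (y - j) (n + 1) (by omega) hy1
  have hC := fall_pos_aux (y - j) (n + 1) (by push_cast at hy ⊢; omega)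
  have hJ : (0 : ℤ) < j + m := by omega
  rw [ha]
  have key : (((j + n + 1 : ℕ) : ℤ) + m) * ((-1 : ℤ) ^ (n + 1)
      * fall (((j + n + 1 : ℕ) : ℤ) + m - 1) (n + 1) * fall y j)
      = ((j : ℤ) + m) * fall y j * ((-1 : ℤ) ^ (n + 1) * fall (((j + n + 1 : ℕ) : ℤ) + m) (n + 1)) := by
    linear_combination ((-1 : ℤ) ^ (n + 1) * fall y j) * hs
  rw [key, ← mul_assoc ((j : ℤ) + m) (fall y j) (fall (y - j) (n + 1))]
  have hP := mul_pos hJ hB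
  rw [mul_le_mul_iff_right₀ hP, mul_right_inj' hP.ne']
  rcases Nat.even_or_odd (n + 1) with he | ho
  · rw [he.neg_one_pow, one_mul]
    rcases hy.lt_or_eq with h | h
    · have := hmono (by omega)
      exact ⟨this.le, fun h' => absurd h' this.ne, fun h' => absurd h'.2 h.ne'⟩
    · have h2 : y - j = ((j + n + 1 : ℕ) : ℤ) + m := by omega
      rw [h2]
      exact ⟨le_rfl, fun _ => ⟨he, h.symm⟩, fun _ => rfl⟩
  · rw [ho.neg_one_pow]
    refine ⟨by linarith, fun h' => by linarith, fun h' => ?_⟩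
    exact absurd h'.1 (Nat.not_even_iff_odd.2 ho)

theorem main_aux (k l d m : ℕ) (hm : 0 < m) (hkl : l < k)
    (j : Fin d → ℕ) (hj : ∀ i, j i ≤ l)
    (hsum : k + m = ∑ i : Fin d, (j i + m)) (x : ℤ) (hx : (k : ℤ) + l + 2 * m ≤ x) :
    assocPoly k m d j x = 0 ↔ ∀ i, Even (k - j i) ∧ x - m = (k : ℤ) + m + j i := by
  have ht := fun i => term_aux k m (j i) (x - m) hm ((hj i).trans_lt hkl)
    (by have := hj i; omega)
  have hs : ((k : ℤ) + m) = ∑ i : Fin d, ((j i : ℤ) + m) := by exact_mod_cast hsum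
  have h1 := Finset.sum_eq_sum_iff_of_le (s := Finset.univ) (fun i _ => (ht i).1)
  rw [← Finset.mul_sum, ← Finset.sum_mul, ← hs, mul_right_inj' (by omega)] at h1
  unfold assocPoly
  rw [sub_eq_zero, eq_comm, h1]
  simp only [Finset.mem_univ, true_imp_iff]
  exact forall_congr' fun i => (ht i).2

/-- Every positive integer root `r` of the associated polynomial
satisfies `r ≤ k + l + 2m`; and `p(k + l + 2m) = 0` iff `k - l` is even and every `jᵢ = l`. -/
theorem roots_le_k_add_l_add_two_m
    (k l d m : ℕ) (hk : 0 < k) (hl : 0 < l) (hm : 0 < m) (hkl : l < k) (hd : 1 < d)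
    (j : Fin d → ℕ) (hj : ∀ i, j i ≤ l)
    (hsum : k + m = ∑ i : Fin d, (j i + m)) :
    (∀ r : ℕ, 0 < r → assocPoly k m d j (r : ℤ) = 0 → r ≤ k + l + 2 * m) ∧
      (assocPoly k m d j ((k : ℤ) + l + 2 * m) = 0 ↔ Even (k - l) ∧ ∀ i, j i = l) := by
  have hi : 0 < d := by omega
  constructor
  · intro r _ h0
    by_contra hlt
    have h := (main_aux k l d m hm hkl j hj hsum r (by omega)).1 h0 ⟨0, hi⟩
    have := hj ⟨0, hi⟩
    have := h.2
    omega
  · rw [main_aux k l d m hm hkl j hj hsum _ le_rfl]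
    constructor
    · intro h
      have e : ∀ i, j i = l := fun i => by have := (h i).2; omega
      have h0 := (h ⟨0, hi⟩).1
      rw [e] at h0
      exact ⟨h0, e⟩
    · rintro ⟨h, e⟩ i
      rw [e i]
      exact ⟨h, by ring⟩
end
end

section
/- Let d > 1 and let s, s_1, …, s_d, r be positive integers with s ≤ r and s_i ≤ r for each i. If C(r−1, s_1−1) + C(r−1, s_2−1) + ⋯ + C(r−1, s_d−1) = C(r−1, s−1) and s_1 + ⋯ + s_d ≤ s, then s_1 = s_2 = ⋯ = s_d, s = d·s_1, and r = (d+1)·s_1. -/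
theorem choose_mono_half (n k : ℕ) : ∀ m, 2 * (k + m) ≤ n → n.choose k ≤ n.choose (k + m) := by
  intro m
  induction m with
  | zero => intro _; exact le_rfl
  | succ m ih =>
    intro h
    have h1 := ih (by omega)
    have h2 : n.choose (k + m) ≤ n.choose (k + m + 1) :=
      Nat.choose_le_succ_of_lt_half_left (by omega)
    exact h1.trans h2

theorem choose_unimodal (n k j : ℕ) (h1 : k ≤ j) (h2 : j + k ≤ n) :
    n.choose k ≤ n.choose j := by
  by_cases h : 2 * j ≤ n
  · have := choose_mono_half n k (j - k) (by omega)
    rwa [show k + (j - k) = j by omega] at this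
  · have := choose_mono_half n k (n - j - k) (by omega)
    rw [show k + (n - j - k) = n - j by omega] at this
    rwa [Nat.choose_symm (by omega)] at this

theorem choose_unimodal_strict (n k j : ℕ) (h1 : k < j) (h2 : j + k < n) :
    n.choose k < n.choose j := by
  refine lt_of_lt_of_le ?_ (choose_unimodal n (k + 1) j h1 (by omega))
  have h := Nat.choose_succ_right_eq n k
  have hp : 0 < n.choose k := Nat.choose_pos (by omega)
  have h3 : k + 1 < n - k := by omega
  have h4 : n.choose k * (k + 1) < n.choose (k + 1) * (k + 1) := by
    rw [h]
    exact Nat.mul_lt_mul_of_pos_left h3 hp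
  exact lt_of_mul_lt_mul_right h4 (Nat.zero_le _)

theorem choose_weight (r a : ℕ) (hr : 0 < r) (ha : 0 < a) :
    r * (r - 1).choose (a - 1) = a * r.choose a := by
  obtain ⟨n, rfl⟩ : ∃ n, r = n + 1 := ⟨r - 1, by omega⟩
  obtain ⟨b, rfl⟩ : ∃ b, a = b + 1 := ⟨a - 1, by omega⟩
  have := Nat.add_one_mul_choose_eq n b
  simp only [Nat.add_sub_cancel]
  rw [this, mul_comm]

/-- If positive integers `s, s_1, …, s_d, r` with `d > 1`, `s ≤ r`,
`sᵢ ≤ r` satisfy `∑ᵢ C(r-1, sᵢ-1) = C(r-1, s-1)` and `∑ᵢ sᵢ ≤ s`, then all the `sᵢ` are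
equal, `s = d·s₁` and `r = (d+1)·s₁`. -/
theorem binomial_diophantine
    (d : ℕ) (hd : 1 < d) (s r : ℕ) (si : Fin d → ℕ)
    (hs : 0 < s) (hr : 0 < r) (hsi : ∀ i, 0 < si i)
    (hsr : s ≤ r) (hsir : ∀ i, si i ≤ r)
    (heq : ∑ i : Fin d, Nat.choose (r - 1) (si i - 1) = Nat.choose (r - 1) (s - 1))
    (hle : ∑ i : Fin d, si i ≤ s) :
    ∃ u : ℕ, (∀ i, si i = u) ∧ s = d * u ∧ r = (d + 1) * u := by
  have hstrict : ∀ (f : Fin d → ℕ), (∀ i, 0 < f i) → ∀ i, f i < ∑ j, f j := by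
    intro f hf i
    obtain ⟨j, hj⟩ : ∃ j : Fin d, j ≠ i := by
      haveI : Nontrivial (Fin d) := Fin.nontrivial_iff_two_le.mpr hd
      exact exists_ne i
    exact Finset.single_lt_sum hj (Finset.mem_univ _) (Finset.mem_univ _) (hf j)
      (fun k _ _ => Nat.zero_le _)
  have hlt : ∀ i, si i < s := fun i => (hstrict si hsi i).trans_le hle
  have hclt : ∀ i, (r - 1).choose (si i - 1) < (r - 1).choose (s - 1) := by
    intro i
    rw [← heq]
    refine hstrict (fun i => (r - 1).choose (si i - 1)) (fun j => Nat.choose_pos ?_) i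
    have := hsir j
    omega
  have hsym : (r - 1).choose (s - 1) = (r - 1).choose (r - s) := by
    rw [← Nat.choose_symm (show s - 1 ≤ r - 1 by omega)]
    congr 1
    omega
  have hsmall : ∀ i, si i ≤ r - s := by
    intro i
    by_contra hcon
    have h1 := hclt i
    have h2 := hlt i
    have h3 := hsi i
    rw [hsym] at h1
    have := choose_unimodal (r - 1) (r - s) (si i - 1) (by omega) (by omega)
    omega
  have hch : ∀ i, r.choose (si i) ≤ r.choose s := fun i =>
    choose_unimodal r (si i) s (hlt i).le (by have := hsmall i; omega)
  have hw : ∑ i, si i * r.choose (si i) = s * r.choose s := by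
    rw [← choose_weight r s hr hs, ← heq, Finset.mul_sum]
    exact Finset.sum_congr rfl fun i _ => (choose_weight r (si i) hr (hsi i)).symm
  have hle1 : ∀ i ∈ Finset.univ, si i * r.choose (si i) ≤ si i * r.choose s :=
    fun i _ => Nat.mul_le_mul_left _ (hch i)
  have hle2 : ∑ i, si i * r.choose s ≤ s * r.choose s := by
    rw [← Finset.sum_mul]
    exact Nat.mul_le_mul_right _ hle
  have hle3 := Finset.sum_le_sum hle1
  have heq1 : ∑ i, si i * r.choose (si i) = ∑ i, si i * r.choose s := by omega
  have heq2 := (Finset.sum_eq_sum_iff_of_le hle1).mp heq1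
  have hu : ∀ i, si i = r - s := by
    intro i
    by_contra hne
    have h1 := hsmall i
    have h2 := choose_unimodal_strict r (si i) s (hlt i) (by omega)
    have h3 := Nat.eq_of_mul_eq_mul_left (hsi i) (heq2 i (Finset.mem_univ _))
    omega
  have hsum : ∑ i, si i = s := by
    have h : (∑ i, si i) * r.choose s = s * r.choose s := by
      rw [Finset.sum_mul, ← heq1, hw]
    exact Nat.eq_of_mul_eq_mul_right (Nat.choose_pos hsr) h
  have hsd : s = d * (r - s) := by
    rw [Finset.sum_congr rfl (fun i _ => hu i)] at hsum
    simpa using hsum.symm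
  refine ⟨r - s, hu, hsd, ?_⟩
  rw [add_mul, one_mul, ← hsd]
  omega
end

section
/- Let k, d, m be positive integers with d > 1, let j_1, …, j_d be integers with 0 ≤ j_i < k satisfying k + m = Σ_{i=1}^{d} (j_i + m), and suppose every j_i is even and some j_i equals 0. If it is not the case that k is even and all j_i equal 0, then the associated polynomial p has no positive integer root. If k is even and all j_i equal 0, then (d+1)m is the unique positive integer root of p. -/
noncomputable section

theorem fall_succ' (x : ℤ) (j : ℕ) : fall x (j+1) = fall x j * (x - j) := by
  simp [fall, Finset.prod_range_succ]

theorem fall_zero' (x : ℤ) : fall x 0 = 1 := by simp [fall]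

theorem fall_add' (x : ℤ) (a b : ℕ) : fall x (a+b) = fall x a * fall (x - a) b := by
  unfold fall
  rw [Finset.prod_range_add]
  congr 1
  apply Finset.prod_congr rfl
  intro i _
  push_cast
  ring

theorem fall_succ_left (x : ℤ) (j : ℕ) : fall x (j+1) = x * fall (x - 1) j := by
  rw [add_comm, fall_add', fall_succ', fall_zero']
  simp

theorem fall_pos' (x : ℤ) (j : ℕ) (h : (j : ℤ) ≤ x) : 0 < fall x j := by
  unfold fall
  apply Finset.prod_pos
  intro i hi
  have := Finset.mem_range.1 hi
  omega

theorem fall_eq_zero (x : ℤ) (j : ℕ) (h0 : 0 ≤ x) (h : x < j) : fall x j = 0 := by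
  unfold fall
  apply Finset.prod_eq_zero (i := x.toNat)
  · rw [Finset.mem_range]; omega
  · omega

theorem fall_nonneg' (x : ℤ) (j : ℕ) (h0 : 0 ≤ x) : 0 ≤ fall x j := by
  rcases lt_or_ge x j with h | h
  · rw [fall_eq_zero x j h0 h]
  · exact (fall_pos' x j h).le

theorem fall_mono (x y : ℤ) (j : ℕ) (h0 : 0 ≤ x) (h : x ≤ y) : fall x j ≤ fall y j := by
  rcases lt_or_ge x j with h1 | h1
  · rw [fall_eq_zero x j h0 h1]; exact fall_nonneg' y j (by omega)
  · unfold fall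
    apply Finset.prod_le_prod
    · intro i hi
      have := Finset.mem_range.1 hi
      omega
    · intro i hi
      omega

theorem fall_lt (x y : ℤ) (j : ℕ) (hj : 0 < j) (h0 : 0 ≤ x) (hy : (j : ℤ) ≤ y) (h : x < y) :
    fall x j < fall y j := by
  rcases lt_or_ge x j with h1 | h1
  · rw [fall_eq_zero x j h0 h1]; exact fall_pos' y j hy
  · unfold fall
    apply Finset.prod_lt_prod_of_nonempty
    · intro i hi
      have := Finset.mem_range.1 hi
      omega
    · intro i hi
      omega
    · exact ⟨0, by simpa using hj⟩

theorem fall_neg' (n : ℤ) (j : ℕ) : fall (-n) j = (-1)^j * fall (n + j - 1) j := by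
  induction j with
  | zero => simp [fall]
  | succ j ih =>
    rw [fall_succ', ih, fall_succ_left]
    have : n + ((j+1 : ℕ) : ℤ) - 1 - 1 = n + j - 1 := by push_cast; ring
    rw [this]
    push_cast
    ring

theorem term_eq (k m j : ℕ) (hj : j < k) :
    ((k : ℤ) + m) * fall ((k : ℤ) + m - 1) (k - j) = (j + m) * fall ((k : ℤ) + m) (k - j) := by
  rw [← fall_succ_left, fall_succ']
  have : ((k - j : ℕ) : ℤ) = k - j := by omega
  rw [this]; ring

theorem fall_split (y : ℤ) (k j : ℕ) (hj : j < k) :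
    fall y k = fall y j * fall (y - j) (k - j) := by
  rw [← fall_add']; congr 1; omega

/-- Suppose all `jᵢ` are even and some `jᵢ` is `0`. If it is not the case
that `k` is even and all `jᵢ = 0`, then the associated polynomial has no positive integer
root; if `k` is even and all `jᵢ = 0`, then `(d+1)m` is its unique positive integer root. -/
theorem all_even_exponents_roots
    (k d m : ℕ) (hk : 0 < k) (hd : 1 < d) (hm : 0 < m)
    (j : Fin d → ℕ) (hj : ∀ i, j i < k)
    (hsum : k + m = ∑ i : Fin d, (j i + m))
    (heven : ∀ i, Even (j i)) (hzero : ∃ i, j i = 0) :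
    (¬ (Even k ∧ ∀ i, j i = 0) → ∀ r : ℕ, 0 < r → assocPoly k m d j (r : ℤ) ≠ 0) ∧
      ((Even k ∧ ∀ i, j i = 0) →
        ∀ r : ℕ, 0 < r → (assocPoly k m d j (r : ℤ) = 0 ↔ r = (d + 1) * m)) := by
  obtain ⟨i0, hi0⟩ := hzero
  have hsumZ : (k : ℤ) + m = ∑ i : Fin d, ((j i : ℤ) + m) := by exact_mod_cast hsum
  -- rewriting of the polynomial
  have key : ∀ x : ℤ, assocPoly k m d j x = fall (x - m) k - (-1) ^ k *
      ∑ i : Fin d, fall ((k : ℤ) + m - 1) (k - j i) * fall (x - m) (j i) := by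
    intro x
    unfold assocPoly
    rw [Finset.mul_sum]
    congr 1
    apply Finset.sum_congr rfl
    intro i _
    have : (-1 : ℤ) ^ k = (-1) ^ (k - j i) := by
      conv_lhs => rw [show k = (k - j i) + j i by have := hj i; omega]
      rw [pow_add, (heven i).neg_one_pow, mul_one]
    rw [this]; ring
  have hcpos : ∀ i, 0 < fall ((k : ℤ) + m - 1) (k - j i) := by
    intro i; apply fall_pos'; have := hj i; omega
  have hTnn : ∀ y : ℤ, -(m : ℤ) < y → ∀ i,
      0 ≤ fall ((k : ℤ) + m - 1) (k - j i) * fall y (j i) := by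
    intro y hy i
    apply mul_nonneg (hcpos i).le
    rcases le_or_gt 0 y with h | h
    · exact fall_nonneg' _ _ h
    · have := fall_neg' (-y) (j i)
      rw [neg_neg, (heven i).neg_one_pow, one_mul] at this
      rw [this]
      apply fall_nonneg'; omega
  have hT0 : ∀ y : ℤ, fall ((k : ℤ) + m - 1) (k - j i0) * fall y (j i0)
      = fall ((k : ℤ) + m - 1) k := by
    intro y; rw [hi0, fall_zero', mul_one, Nat.sub_zero]
  have hle0 : ∀ y : ℤ, -(m : ℤ) < y → fall ((k : ℤ) + m - 1) k ≤
      ∑ i : Fin d, fall ((k : ℤ) + m - 1) (k - j i) * fall y (j i) := by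
    intro y hy
    rw [← hT0 y]
    exact Finset.single_le_sum
      (f := fun i => fall ((k : ℤ) + m - 1) (k - j i) * fall y (j i))
      (fun i _ => hTnn y hy i) (Finset.mem_univ i0)
  have hc0 : 0 < fall ((k : ℤ) + m - 1) k := by apply fall_pos'; omega
  have hnegy : ∀ y : ℤ, -(m : ℤ) < y → y < 0 → 
      (-1) ^ k * fall y k < fall ((k : ℤ) + m - 1) k := by
    intro y h1 h2
    have := fall_neg' (-y) k
    rw [neg_neg] at this
    rw [this, ← mul_assoc, ← mul_pow]
    simp only [mul_neg, mul_one, neg_neg, one_pow, one_mul]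
    apply fall_lt <;> omega
  -- odd case
  have hodd : ¬ Even k → ∀ r : ℕ, 0 < r → assocPoly k m d j r ≠ 0 := by
    intro hk2 r hr
    rw [key]
    have ho : (-1 : ℤ) ^ k = -1 := (Nat.not_even_iff_odd.1 hk2).neg_one_pow
    rw [ho]
    have h1 := hle0 ((r : ℤ) - m) (by omega)
    rcases le_or_gt 0 ((r : ℤ) - m) with h | h
    · have := fall_nonneg' _ k h
      linarith
    · have := hnegy _ (by omega) h
      rw [ho] at this
      linarith
  -- maximal index
  obtain ⟨iM, -, hiM⟩ := Finset.exists_max_image (Finset.univ : Finset (Fin d)) j ⟨i0, by simp⟩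
  have hlow : Even k → ∀ r : ℕ, 0 < r → (r : ℤ) - m < k + m + j iM →
      assocPoly k m d j r < 0 := by
    intro hk2 r hr hlt
    rw [key, hk2.neg_one_pow, one_mul]
    rcases le_or_gt 0 ((r : ℤ) - m) with h | h
    · set y := (r : ℤ) - m with hy
      have hM : fall y k ≤ fall ((k : ℤ) + m - 1) (k - j iM) * fall y (j iM) := by
        rw [fall_split y k (j iM) (hj iM), mul_comm]
        rcases lt_or_ge y (j iM) with h3 | h3
        · rw [fall_eq_zero y _ h h3]; simp
        · apply mul_le_mul_of_nonneg_right _ (fall_nonneg' _ _ h)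
          apply fall_mono <;> omega
      have hex : ∃ i1, i1 ≠ iM ∧ j i1 = 0 := by
        by_cases hz : i0 = iM
        · haveI : Nontrivial (Fin d) := Fin.nontrivial_iff_two_le.2 hd
          obtain ⟨i1, h1⟩ := exists_ne iM
          refine ⟨i1, h1, ?_⟩
          have := hiM i1 (Finset.mem_univ _)
          rw [← hz, hi0] at this
          omega
        · exact ⟨i0, hz, hi0⟩
      obtain ⟨i1, hne, hi1⟩ := hex
      have hS := Finset.single_lt_sum
        (f := fun i => fall ((k : ℤ) + m - 1) (k - j i) * fall y (j i))
        hne (Finset.mem_univ iM) (Finset.mem_univ i1)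
        (by simpa [hi1, fall_zero'] using hc0)
        (fun i _ _ => hTnn y (by omega) i)
      linarith
    · have h1 := hle0 ((r : ℤ) - m) (by omega)
      have := hnegy _ (by omega) h
      rw [hk2.neg_one_pow, one_mul] at this
      linarith
  have hterm : ∀ y : ℤ, (k : ℤ) + m + j iM ≤ y → ∀ i,
      ((k : ℤ) + m) * (fall ((k : ℤ) + m - 1) (k - j i) * fall y (j i)) ≤
        (j i + m) * fall y k := by
    intro y hy i
    have hm' := hiM i (Finset.mem_univ _)
    have hji := hj i
    rw [← mul_assoc, term_eq k m (j i) hji, fall_split y k (j i) hji, mul_assoc]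
    apply mul_le_mul_of_nonneg_left _ (by positivity)
    rw [mul_comm]
    apply mul_le_mul_of_nonneg_left _ (fall_nonneg' _ _ (by omega))
    apply fall_mono <;> omega
  have hterm' : ∀ y : ℤ, (k : ℤ) + m + j iM ≤ y → (k : ℤ) + m < y →
      ((k : ℤ) + m) * (fall ((k : ℤ) + m - 1) (k - j i0) * fall y (j i0)) <
        (j i0 + m) * fall y k := by
    intro y hy hy2
    rw [← mul_assoc, term_eq k m (j i0) (hj i0), hi0, fall_zero', mul_one, Nat.sub_zero]
    apply mul_lt_mul_of_pos_left _ (by push_cast; omega)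
    apply fall_lt <;> omega
  have hhigh : Even k → ∀ r : ℕ, (k : ℤ) + m + j iM ≤ (r : ℤ) - m → (k : ℤ) + m < (r : ℤ) - m →
      0 < assocPoly k m d j r := by
    intro hk2 r h1 h2
    rw [key, hk2.neg_one_pow, one_mul]
    have := Finset.sum_lt_sum (fun i (_ : i ∈ Finset.univ) => hterm _ h1 i)
      ⟨i0, Finset.mem_univ _, hterm' _ h1 h2⟩
    rw [← Finset.mul_sum, ← Finset.sum_mul, ← hsumZ] at this
    have := lt_of_mul_lt_mul_left this (by positivity)
    linarith
  constructor
  · intro hn r hr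
    by_cases hk2 : Even k
    · have hJ : 0 < j iM := by
        by_contra hc
        apply hn
        refine ⟨hk2, fun i => ?_⟩
        have := hiM i (Finset.mem_univ _)
        omega
      rcases lt_or_ge ((r : ℤ) - m) (k + m + j iM) with h | h
      · exact (hlow hk2 r hr h).ne
      · exact (hhigh hk2 r h (by omega)).ne'
    · exact hodd hk2 r hr
  · rintro ⟨hk2, hz⟩ r hr
    have hkm : (k : ℤ) + m = d * m := by
      rw [hsumZ]; simp [hz]
    have hJ : j iM = 0 := hz iM
    have hiff : r = (d + 1) * m ↔ (r : ℤ) - m = k + m := by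
      rw [hkm]
      constructor
      · rintro rfl; push_cast; ring
      · intro h; zify; linarith
    rw [hiff]
    constructor
    · intro h0
      rcases lt_trichotomy ((r : ℤ) - m) (k + m) with h | h | h
      · have := hlow hk2 r hr (by omega)
        omega
      · exact h
      · have := hhigh hk2 r (by omega) h
        omega
    · intro h
      rw [key, hk2.neg_one_pow, one_mul, h]
      have ht := term_eq k m 0 hk
      simp only [Nat.sub_zero, Nat.cast_zero, zero_add] at ht
      simp only [hz, fall_zero', Nat.sub_zero, mul_one, Finset.sum_const, Finset.card_univ,
        Fintype.card_fin, nsmul_eq_mul]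
      rw [hkm] at ht ⊢
      have hm0 : (m : ℤ) ≠ 0 := by omega
      apply mul_left_cancel₀ hm0
      linear_combination -ht
end
end

section
/- Let m, k be positive integers and a, b nonnegative integers with a + b > 1 and m·a + (m+1)·b = k + m, and let p be the polynomial associated to the equation f^{(k)} = f^a (f')^b and the multiplicity m (i.e. the exponent list consists of a copies of 0 and b copies of 1). Then: (i) for an integer r with m ≤ r < k + m, p(r) = 0 if and only if b·(r+1) = k + m; (ii) for an integer r with k + m ≤ r ≤ k + 2m + 1, p(r) = 0 if and only if one of the following holds: r = k + 2m + 1 with a = 0, b·(m+1) = k + m, and k odd; or r = k + 2m with a·m = k + m, b = 0, and k even; or r = k + 2m − 1 with a·m = k − 1, b = 1, and k odd. -/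
noncomputable section

theorem fall_succ_last (x : ℤ) (j : ℕ) : fall x (j + 1) = fall x j * (x - j) := by
  simp [fall, Finset.prod_range_succ]

theorem fall_succ_first (x : ℤ) (j : ℕ) : fall x (j + 1) = x * fall (x - 1) j := by
  unfold fall
  rw [Finset.prod_range_succ', mul_comm]
  congr 1
  · simp
  · apply Finset.prod_congr rfl
    intro i _
    push_cast
    ring

theorem fall_zero_of_lt (x : ℤ) (k : ℕ) (h0 : 0 ≤ x) (h1 : x < k) : fall x k = 0 := by
  unfold fall
  apply Finset.prod_eq_zero (i := x.toNat)
  · simp; omega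
  · omega

theorem fall_pos_of_le (x : ℤ) (k : ℕ) (h : (k : ℤ) ≤ x) : 0 < fall x k := by
  unfold fall
  apply Finset.prod_pos
  intro i hi
  simp at hi
  omega

theorem fall_strict (x y : ℤ) (k : ℕ) (hk : 0 < k) (h : (k : ℤ) ≤ x) (hxy : x < y) :
    fall x k < fall y k := by
  unfold fall
  apply Finset.prod_lt_prod_of_nonempty
  · intro i hi
    simp at hi
    omega
  · intro i hi
    omega
  · exact ⟨0, by simpa using hk⟩

theorem fall_inj (x y : ℤ) (k : ℕ) (hk : 0 < k) (hx : (k : ℤ) ≤ x) (hy : (k : ℤ) ≤ y)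
    (h : fall x k = fall y k) : x = y := by
  rcases lt_trichotomy x y with h1 | h1 | h1
  · have := fall_strict x y k hk hx h1
    omega
  · exact h1
  · have := fall_strict y x k hk hy h1
    omega

theorem assocPoly_formula (m n a b : ℕ)
    (hsum : m * a + (m + 1) * b = n + 1 + m) (r : ℤ) :
    assocPoly (n + 1) m (a + b) (fun i => if (i : ℕ) < a then 0 else 1) r =
      fall (r - m) (n + 1) + (-1) ^ n * (fall ((n : ℤ) + m) n * ((n : ℤ) + 1 + m - b * (r + 1))) := by
  have hs : (m : ℤ) * a + (m + 1) * b = n + 1 + m := by exact_mod_cast hsum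
  unfold assocPoly
  rw [Fin.sum_univ_add]
  have e1 : ((n + 1 : ℕ) : ℤ) + m - 1 = n + m := by push_cast; ring
  simp only [Fin.val_castAdd, Fin.is_lt, if_true, Fin.val_natAdd, e1]
  simp only [not_lt.mpr (Nat.le_add_right a _), if_false, Finset.sum_const, Finset.card_univ,
    Fintype.card_fin, nsmul_eq_mul, Nat.sub_zero, Nat.add_sub_cancel]
  have e2 : fall ((n : ℤ) + m) (n + 1) = fall ((n : ℤ) + m) n * m := by
    rw [fall_succ_last]; ring
  have e3 : fall (r - m) 0 = 1 := by simp [fall]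
  have e4 : fall (r - m) 1 = r - m := by simp [fall]
  rw [e2, e3, e4, ← hs]
  ring

/-- The integer roots of the polynomial associated to
`f⁽ᵏ⁾ = fᵃ (f')ᵇ` and the multiplicity `m` (exponent list: `a` copies of `0` and `b`
copies of `1`), in the ranges `m ≤ r < k + m` and `k + m ≤ r ≤ k + 2m + 1`. -/
theorem roots_of_assocPoly_fa_f_prime_b
    (m k a b : ℕ) (hm : 0 < m) (hk : 0 < k) (hab : 1 < a + b)
    (hsum : m * a + (m + 1) * b = k + m) :
    (∀ r : ℤ, (m : ℤ) ≤ r → r < (k : ℤ) + m →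
      (assocPoly k m (a + b) (fun i => if (i : ℕ) < a then 0 else 1) r = 0 ↔
        (b : ℤ) * (r + 1) = (k : ℤ) + m)) ∧
    (∀ r : ℤ, (k : ℤ) + m ≤ r → r ≤ (k : ℤ) + 2 * m + 1 →
      (assocPoly k m (a + b) (fun i => if (i : ℕ) < a then 0 else 1) r = 0 ↔
        (r = (k : ℤ) + 2 * m + 1 ∧ a = 0 ∧ (b : ℤ) * ((m : ℤ) + 1) = (k : ℤ) + m ∧ Odd k) ∨
        (r = (k : ℤ) + 2 * m ∧ (a : ℤ) * m = (k : ℤ) + m ∧ b = 0 ∧ Even k) ∨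
        (r = (k : ℤ) + 2 * m - 1 ∧ (a : ℤ) * m = (k : ℤ) - 1 ∧ b = 1 ∧ Odd k))) := by
  obtain ⟨n, rfl⟩ : ∃ n, k = n + 1 := ⟨k - 1, by omega⟩
  have hs : (m : ℤ) * a + (m + 1) * b = n + 1 + m := by exact_mod_cast hsum
  have hF : 0 < fall ((n : ℤ) + m) n := fall_pos_of_le _ _ (by omega)
  have hm' : (0 : ℤ) < m := by exact_mod_cast hm
  constructor
  · intro r h1 h2
    rw [assocPoly_formula m n a b hsum, fall_zero_of_lt _ _ (by omega) (by omega)]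
    have : ((-1 : ℤ)) ^ n ≠ 0 := by simp
    simp only [zero_add, mul_eq_zero, this, hF.ne', false_or]
    push_cast
    constructor <;> intro h <;> linarith
  · intro r h1 h2
    rw [assocPoly_formula m n a b hsum]
    have hL : 0 < fall (r - m) (n + 1) := fall_pos_of_le _ _ (by omega)
    have hG : fall ((n : ℤ) + 1 + m) (n + 1) = (n + 1 + m) * fall ((n : ℤ) + m) n := by
      rw [fall_succ_first]
      congr 2
      ring
    set F := fall ((n : ℤ) + m) n with hFdef
    push_cast at h1 h2 ⊢
    rcases (by omega : b = 0 ∨ b = 1 ∨ 2 ≤ b) with hb | hb | hb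
    · subst hb
      have ha : (a : ℤ) * m = n + 1 + m := by push_cast at hs; linarith
      have ha0 : a ≠ 0 := by omega
      rcases Nat.even_or_odd n with hn | hn
      · have hk1 : ¬ Even (n + 1) := by rw [Nat.even_add_one]; simpa using hn
        rw [hn.neg_one_pow]
        constructor
        · intro h
          have : 0 < F * ((n : ℤ) + 1 + m) := by positivity
          push_cast at h
          exfalso
          linarith
        · rintro (h | h | h)
          · exact absurd h.2.1 ha0
          · exact absurd h.2.2.2 hk1
          · omega
      · have hk1 : Even (n + 1) := hn.add_one
        rw [hn.neg_one_pow]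
        constructor
        · intro h
          have h3 : fall (r - m) (n + 1) = fall ((n : ℤ) + 1 + m) (n + 1) := by
            rw [hG]; push_cast at h; linarith
          have := fall_inj _ _ _ (by omega) (by push_cast; linarith) (by push_cast; linarith) h3
          exact Or.inr (Or.inl ⟨by linarith, ha, rfl, hk1⟩)
        · rintro (h | h | h)
          · exact absurd h.2.1 ha0
          · have : r - m = (n : ℤ) + 1 + m := by linarith [h.1]
            rw [this, hG]; push_cast; ring
          · omega
    · subst hb
      have ha : (a : ℤ) * m = n + 1 - 1 := by push_cast at hs; linarith
      have ha0 : a ≠ 0 := by omega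
      have hn0 : 0 < n := by
        rcases Nat.eq_zero_or_pos n with h | h
        · subst h
          have : (a : ℤ) * m ≠ 0 := by positivity
          exact absurd (by simpa using ha) this
        · exact h
      have hlast : fall (r - m) (n + 1) = fall (r - m) n * (r - m - n) := fall_succ_last _ _
      have hp : 0 < r - m - n := by linarith
      rcases Nat.even_or_odd n with hn | hn
      · have hk1 : Odd (n + 1) := hn.add_one
        rw [hn.neg_one_pow]
        constructor
        · intro h
          have h3 : fall (r - m) n = F := by
            apply mul_right_cancel₀ hp.ne'
            rw [← hlast]
            push_cast at h
            linarith
          have := fall_inj _ _ _ hn0 (by linarith) (by linarith) h3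
          exact Or.inr (Or.inr ⟨by linarith, ha, rfl, hk1⟩)
        · rintro (h | h | h)
          · exact absurd h.2.1 ha0
          · omega
          · have : r - m = (n : ℤ) + m := by linarith [h.1]
            rw [hlast, this, h.1]; push_cast; ring
      · have hk1 : ¬ Odd (n + 1) := by
          rw [Nat.not_odd_iff_even]; exact hn.add_one
        rw [hn.neg_one_pow]
        constructor
        · intro h
          have : 0 < F * (r - m - n) := by positivity
          push_cast at h
          exfalso
          linarith
        · rintro (h | h | h)
          · exact absurd h.2.1 ha0
          · omega
          · exact absurd h.2.2.2 hk1
    · have hb' : (2 : ℤ) ≤ b := by exact_mod_cast hb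
      have hr : 0 < r + 1 := by linarith
      have hbr : 2 * (r + 1) ≤ b * (r + 1) := mul_le_mul_of_nonneg_right hb' hr.le
      rcases Nat.even_or_odd n with hn | hn
      · have hk1 : Odd (n + 1) := hn.add_one
        rw [hn.neg_one_pow]
        have key : r = n + 1 + 2 * m + 1 →
            (m + 1) * (fall (r - m) (n + 1) + 1 * (F * ((n : ℤ) + 1 + m - b * (r + 1)))) =
              F * (m * a * (n + 2 * m + 3)) := by
          intro hr1
          have e0 : r - m = (n : ℤ) + m + 2 := by rw [hr1]; ring
          have e1 : fall ((n : ℤ) + m + 2) (n + 1) = (n + m + 2) * fall ((n : ℤ) + 1 + m) n := by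
            rw [fall_succ_first]
            congr 2
            ring
          have e2 : fall ((n : ℤ) + 1 + m) (n + 1) = fall ((n : ℤ) + 1 + m) n * (m + 1) := by
            rw [fall_succ_last]
            congr 1
            ring
          rw [e0, e1, hr1]
          have e3 : ((m : ℤ) + 1) * b = n + 1 + m - m * a := by linarith
          rw [hG] at e2
          linear_combination (-((n : ℤ) + m + 2)) * e2 - F * (n + 2 * m + 3) * e3
        constructor
        · intro h
          have hr1 : r = n + 1 + 2 * m + 1 := by
            by_contra hne
            have hle : r - m ≤ n + 1 + m := by omega
            have h3 : fall (r - m) (n + 1) ≤ fall ((n : ℤ) + 1 + m) (n + 1) := by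
              rcases hle.lt_or_eq with h4 | h4
              · exact (fall_strict _ _ _ (by omega) (by push_cast; linarith) h4).le
              · rw [h4]
            rw [hG] at h3
            have : 0 < F * (b * (r + 1) - 2 * (n + 1 + m)) := by
              apply mul_pos hF
              linarith
            linarith
          have h5 := key hr1
          rw [h, mul_zero] at h5
          have ha : a = 0 := by
            by_contra ha0
            have : F * ((m : ℤ) * a * (n + 2 * m + 3)) ≠ 0 := by positivity
            exact this h5.symm
          subst ha
          exact Or.inl ⟨hr1, rfl, by push_cast at hs; linarith, hk1⟩
        · rintro (h | h | h)
          · have h5 := key h.1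
            rw [h.2.1] at h5
            have : (m : ℤ) + 1 ≠ 0 := by positivity
            apply mul_left_cancel₀ this
            rw [h5]
            push_cast
            ring
          · omega
          · omega
      · have hk1 : ¬ Odd (n + 1) := by
          rw [Nat.not_odd_iff_even]; exact hn.add_one
        rw [hn.neg_one_pow]
        constructor
        · intro h
          have : 0 < F * (b * (r + 1) - (n + 1 + m)) := by
            apply mul_pos hF
            linarith
          exfalso
          linarith
        · rintro (h | h | h)
          · exact absurd h.2.2.2 hk1
          · omega
          · omega
end
end

section
/- Let l be a positive integer and let c_0, …, c_l be positive integers with gcd(c_0, c_1) = 1. Then there exists a constant C > 0 such that for every nonnegative integer k, the number N_k of (l+1)-tuples of nonnegative integers (a_0, …, a_l) with c_0 a_0 + c_1 a_1 + ⋯ + c_l a_l = k satisfies |N_k − k^l / (l! · c_0 c_1 ⋯ c_l)| ≤ C·(k^{l−1} + 1). -/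
/-- The number of representations of `k`. -/
noncomputable def repCount {n : ℕ} (c : Fin n → ℕ) (k : ℕ) : ℕ :=
  Nat.card {a : Fin n → ℕ // ∑ i : Fin n, c i * a i = k}

theorem rep_finite {n : ℕ} (c : Fin n → ℕ) (hc : ∀ i, 0 < c i) (k : ℕ) :
    Finite {a : Fin n → ℕ // ∑ i : Fin n, c i * a i = k} := by
  have h : {a : Fin n → ℕ | ∑ i : Fin n, c i * a i = k}.Finite := by
    apply Set.Finite.subset (Set.finite_Iic (fun _ : Fin n => k))
    intro a ha i
    simp only [Set.mem_setOf_eq] at ha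
    have h1 : c i * a i ≤ ∑ i : Fin n, c i * a i :=
      Finset.single_le_sum (f := fun i => c i * a i) (fun _ _ => Nat.zero_le _)
        (Finset.mem_univ i)
    have h2 : a i ≤ c i * a i := Nat.le_mul_of_pos_left _ (hc i)
    show a i ≤ k
    omega
  exact h.to_subtype

theorem rep_small {n : ℕ} (c : Fin (n + 1) → ℕ) (k : ℕ)
    (hk : k < c (Fin.last n)) : repCount c k = repCount (fun i => c (Fin.castSucc i)) k := by
  unfold repCount
  have key : ∀ a : Fin (n + 1) → ℕ, ∑ i, c i * a i = k → a (Fin.last n) = 0 := by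
    intro a ha
    rw [Fin.sum_univ_castSucc] at ha
    by_contra h
    have : c (Fin.last n) ≤ c (Fin.last n) * a (Fin.last n) :=
      Nat.le_mul_of_pos_right _ (Nat.pos_of_ne_zero h)
    omega
  refine Nat.card_congr
    { toFun := fun a => ⟨fun i => a.1 (Fin.castSucc i), ?_⟩
      invFun := fun a => ⟨Fin.snoc (α := fun _ => ℕ) a.1 0, ?_⟩
      left_inv := ?_
      right_inv := ?_ }
  · have h1 := a.2
    have h2 := key a.1 h1
    rw [Fin.sum_univ_castSucc, h2] at h1
    simpa using h1
  · rw [Fin.sum_univ_castSucc]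
    simpa using a.2
  · intro a
    have h2 := key a.1 a.2
    apply Subtype.ext
    funext i
    refine Fin.lastCases ?_ (fun j => ?_) i
    · simp [h2]
    · simp
  · intro a
    apply Subtype.ext
    funext i
    simp

theorem rep_large {n : ℕ} (c : Fin (n + 1) → ℕ) (hc : ∀ i, 0 < c i) (k : ℕ) :
    repCount c (k + c (Fin.last n)) =
      repCount (fun i => c (Fin.castSucc i)) (k + c (Fin.last n)) + repCount c k := by
  unfold repCount
  haveI := rep_finite (fun i => c (Fin.castSucc i)) (fun i => hc _) (k + c (Fin.last n))
  haveI := rep_finite c hc k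
  rw [← Nat.card_sum]
  symm
  refine Nat.card_eq_of_bijective (Sum.elim
    (fun a => ⟨Fin.snoc (α := fun _ => ℕ) a.1 0, ?_⟩)
    (fun a => ⟨Fin.snoc (α := fun _ => ℕ) (fun i => a.1 (Fin.castSucc i))
      (a.1 (Fin.last n) + 1), ?_⟩)) ⟨?_, ?_⟩
  · rw [Fin.sum_univ_castSucc]
    simpa using a.2
  · have h := a.2
    rw [Fin.sum_univ_castSucc] at h ⊢
    simp only [Fin.snoc_castSucc, Fin.snoc_last]
    rw [mul_add]
    omega
  · rintro (a | a) (b | b) h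
    · have h' := congrArg Subtype.val h
      simp only [Sum.elim_inl] at h'
      congr 1
      apply Subtype.ext
      funext i
      simpa using congrFun h' (Fin.castSucc i)
    · have h' := congrFun (congrArg Subtype.val h) (Fin.last n)
      simp at h'
    · have h' := congrFun (congrArg Subtype.val h) (Fin.last n)
      simp at h'
    · have h' := congrArg Subtype.val h
      simp only [Sum.elim_inr] at h'
      congr 1
      apply Subtype.ext
      funext i
      refine Fin.lastCases ?_ (fun j => ?_) i
      · simpa using congrFun h' (Fin.last n)
      · simpa using congrFun h' (Fin.castSucc j)
  · rintro ⟨a, ha⟩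
    have ha' := ha
    rw [Fin.sum_univ_castSucc] at ha'
    rcases Nat.eq_zero_or_pos (a (Fin.last n)) with h0 | h0
    · refine ⟨Sum.inl ⟨fun i => a (Fin.castSucc i), ?_⟩, ?_⟩
      · rw [h0] at ha'
        simpa using ha'
      · apply Subtype.ext
        funext i
        refine Fin.lastCases ?_ (fun j => ?_) i
        · simp [h0]
        · simp
    · obtain ⟨m, hm⟩ : ∃ m, a (Fin.last n) = m + 1 := ⟨_, (Nat.succ_pred_eq_of_pos h0).symm⟩
      refine ⟨Sum.inr ⟨Fin.snoc (α := fun _ => ℕ) (fun i => a (Fin.castSucc i)) m, ?_⟩, ?_⟩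
      · rw [Fin.sum_univ_castSucc]
        simp only [Fin.snoc_castSucc, Fin.snoc_last]
        rw [hm, mul_add] at ha'
        omega
      · apply Subtype.ext
        funext i
        refine Fin.lastCases ?_ (fun j => ?_) i
        · simp [hm]
        · simp

theorem rep_base (c : Fin 2 → ℕ) (hc : ∀ i, 0 < c i) (hcop : Nat.gcd (c 0) (c 1) = 1) (k : ℕ) :
    ∃ v, repCount c k = Nat.count (· ≡ v [MOD c 0]) (k / c 1 + 1) := by
  have h0 := hc 0
  have h1 := hc 1
  -- choose `v` with `c₁ v ≡ k (mod c₀)`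
  have hv : ∃ v, c 1 * v ≡ k [MOD c 0] := by
    obtain ⟨x, hx, hx'⟩ := Nat.chineseRemainder hcop k 0
    obtain ⟨v, rfl⟩ := (Nat.modEq_zero_iff_dvd).1 hx'
    exact ⟨v, hx⟩
  obtain ⟨v, hv⟩ := hv
  refine ⟨v, ?_⟩
  rw [Nat.count_eq_card_filter_range, ← Nat.card_eq_finsetCard]
  unfold repCount
  refine Nat.card_eq_of_bijective (fun a => ⟨a.1 1, ?_⟩) ⟨?_, ?_⟩
  · have ha := a.2
    rw [Fin.sum_univ_two] at ha
    rw [Finset.mem_filter, Finset.mem_range]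
    constructor
    · have : a.1 1 ≤ k / c 1 := by
        rw [Nat.le_div_iff_mul_le h1, mul_comm]
        omega
      omega
    · have : c 1 * a.1 1 ≡ c 1 * v [MOD c 0] := by
        refine Nat.ModEq.trans ?_ hv.symm
        have e := congrArg (· % c 0) ha
        simp only [Nat.mul_add_mod] at e
        exact e
      exact Nat.ModEq.cancel_left_of_coprime hcop this
  · rintro ⟨a, ha⟩ ⟨b, hb⟩ h
    have h' : a 1 = b 1 := congrArg Subtype.val h
    rw [Fin.sum_univ_two] at ha hb
    apply Subtype.ext
    funext i
    fin_cases i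
    · have : c 0 * a 0 = c 0 * b 0 := by rw [h'] at ha; omega
      exact Nat.eq_of_mul_eq_mul_left h0 this
    · exact h'
  · rintro ⟨b, hb⟩
    rw [Finset.mem_filter, Finset.mem_range] at hb
    obtain ⟨hb1, hb2⟩ := hb
    have hle : c 1 * b ≤ k := by
      have : b ≤ k / c 1 := by omega
      rw [Nat.le_div_iff_mul_le h1, mul_comm] at this
      exact this
    have hm : c 1 * b ≡ k [MOD c 0] := (hb2.mul_left (c 1)).trans hv
    obtain ⟨t, ht⟩ := (Nat.modEq_iff_dvd' hle).1 hm
    refine ⟨⟨![t, b], ?_⟩, ?_⟩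
    · rw [Fin.sum_univ_two]
      simp
      omega
    · simp

theorem rep_base_bound (c : Fin 2 → ℕ) (hc : ∀ i, 0 < c i) (hcop : Nat.gcd (c 0) (c 1) = 1)
    (k : ℕ) : |(repCount c k : ℝ) - (k : ℝ) / (c 0 * c 1)| ≤ 2 := by
  obtain ⟨v, hv⟩ := rep_base c hc hcop k
  rw [hv, Nat.count_modEq_card _ (hc 0)]
  set m := k / c 1 with hmdef
  have h0 : (0:ℝ) < c 0 := by exact_mod_cast hc 0
  have h1 : (0:ℝ) < c 1 := by exact_mod_cast hc 1
  have h01 : (1:ℝ) ≤ c 0 := by exact_mod_cast hc 0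
  set q := (m + 1) / c 0 with hq
  -- `q c0 ≤ m+1 < (q+1) c0` and `m c1 ≤ k < (m+1) c1`
  have e1 : (q:ℝ) * c 0 ≤ m + 1 := by exact_mod_cast Nat.div_mul_le_self (m+1) (c 0)
  have e2 : (m:ℝ) + 1 < (q + 1) * c 0 := by
    exact_mod_cast Nat.lt_mul_of_div_lt (Nat.lt_succ_self q) (hc 0)
  have e3 : (m:ℝ) * c 1 ≤ k := by exact_mod_cast Nat.div_mul_le_self k (c 1)
  have e4 : (k:ℝ) < (m + 1) * c 1 := by
    exact_mod_cast Nat.lt_mul_of_div_lt (Nat.lt_succ_self m) (hc 1)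
  have f1 : (k:ℝ) / (c 0 * c 1) ≤ q + 1 := by
    rw [div_le_iff₀ (by positivity)]
    nlinarith
  have f2 : (q:ℝ) - 1 ≤ (k:ℝ) / (c 0 * c 1) := by
    rw [le_div_iff₀ (by positivity)]
    have : ((q:ℝ) - 1) * c 0 ≤ m := by nlinarith
    nlinarith
  rw [abs_le]
  push_cast
  split_ifs <;> constructor <;> push_cast <;> linarith

theorem pow_diff (l : ℕ) (x y : ℝ) (hy : 0 ≤ y) (hxy : y ≤ x) :
    (l + 1) * ((x - y) * y ^ l) ≤ x ^ (l + 1) - y ^ (l + 1) ∧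
      x ^ (l + 1) - y ^ (l + 1) ≤ (l + 1) * ((x - y) * x ^ l) := by
  have hx : 0 ≤ x := hy.trans hxy
  induction l with
  | zero => simp
  | succ l ih =>
    obtain ⟨i1, i2⟩ := ih
    have hp : y ^ (l + 1) ≤ x ^ (l + 1) := by gcongr
    have e : x ^ (l + 1 + 1) - y ^ (l + 1 + 1)
        = x * (x ^ (l + 1) - y ^ (l + 1)) + (x - y) * y ^ (l + 1) := by ring
    have e' : x ^ (l + 1 + 1) - y ^ (l + 1 + 1)
        = y * (x ^ (l + 1) - y ^ (l + 1)) + (x - y) * x ^ (l + 1) := by ring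
    have g : (x - y) * y ^ (l + 1) ≤ (x - y) * x ^ (l + 1) :=
      mul_le_mul_of_nonneg_left hp (sub_nonneg.2 hxy)
    push_cast
    constructor
    · rw [e']
      have := mul_le_mul_of_nonneg_left i1 hy
      have e2 : y * ((l + 1) * ((x - y) * y ^ l)) = (l + 1) * ((x - y) * y ^ (l + 1)) := by ring
      linarith
    · rw [e]
      have := mul_le_mul_of_nonneg_left i2 hx
      have e2 : x * ((l + 1) * ((x - y) * x ^ l)) = (l + 1) * ((x - y) * x ^ (l + 1)) := by ring
      linarith

/-- The abstract recursion step. `D` is `l! ∏ c`, `d` the new coin, `l = p + 1`. -/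
theorem rec_step (p : ℕ) (f g : ℕ → ℕ) (d : ℕ) (hd : 0 < d) (D C : ℝ) (hD : 0 < D) (hC : 0 < C)
    (hf : ∀ k : ℕ, |(f k : ℝ) - (k : ℝ) ^ (p + 1) / D| ≤ C * ((k : ℝ) ^ p + 1))
    (hs : ∀ k, k < d → g k = f k) (hg : ∀ k, g (k + d) = f (k + d) + g k) (k : ℕ) :
    |(g k : ℝ) - (k : ℝ) ^ (p + 2) / ((p + 2) * D * d)| ≤
      C * ((k + 1) * ((k : ℝ) ^ p + 1)) + (k : ℝ) ^ (p + 1) / D := by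
  have hd' : (0:ℝ) < d := by exact_mod_cast hd
  induction k using Nat.strong_induction_on with
  | _ k ih =>
  rcases lt_or_ge k d with h | h
  · rw [hs k h]
    have h1 := hf k
    have hk : (k:ℝ) ≤ d := by exact_mod_cast h.le
    have a1 : (k : ℝ) ^ (p + 2) / ((p + 2) * D * d) ≤ (k : ℝ) ^ (p + 1) / D := by
      rw [div_le_div_iff₀ (by positivity) hD]
      have : (k:ℝ) ^ (p + 2) ≤ (k:ℝ) ^ (p + 1) * ((p + 2) * d) := by
        rw [pow_succ (k:ℝ) (p + 1)]
        gcongr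
        have : (0:ℝ) ≤ p := by positivity
        nlinarith
      calc (k:ℝ) ^ (p + 2) * D ≤ ((k:ℝ) ^ (p + 1) * ((p + 2) * d)) * D := by gcongr
        _ = _ := by ring
    have a2 : 0 ≤ (k : ℝ) ^ (p + 2) / ((p + 2) * D * d) := by positivity
    have a3 : C * ((k : ℝ) ^ p + 1) ≤ C * ((k + 1) * ((k : ℝ) ^ p + 1)) := by
      gcongr
      have : (0:ℝ) ≤ k * ((k:ℝ) ^ p + 1) := by positivity
      linarith
    rw [abs_le] at h1 ⊢
    constructor <;> linarith [h1.1, h1.2]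
  · obtain ⟨j, rfl⟩ := Nat.exists_eq_add_of_le' h
    have i1 := ih j (by omega)
    have h1 := hf (j + d)
    rw [hg]
    obtain ⟨q1, q2⟩ := pow_diff (p + 1) ((j + d : ℕ) : ℝ) (j : ℝ) (by positivity)
      (by push_cast; linarith)
    have hx : ((j + d : ℕ) : ℝ) - j = d := by push_cast; ring
    rw [hx] at q1 q2
    have hjx : (j:ℝ) + 1 ≤ ((j + d : ℕ) : ℝ) := by
      have : j + 1 ≤ j + d := by omega
      exact_mod_cast this
    set x : ℝ := ((j + d : ℕ) : ℝ)
    have r1 : (j:ℝ) ^ (p + 1) / D ≤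
        x ^ (p + 2) / ((p + 2) * D * d) - (j:ℝ) ^ (p + 2) / ((p + 2) * D * d) := by
      rw [← sub_div, div_le_div_iff₀ hD (by positivity)]
      push_cast at q1
      calc _ = ((p + 1 + 1) * (d * (j:ℝ) ^ (p + 1))) * D := by ring
        _ ≤ _ := by gcongr
    have r2 : x ^ (p + 2) / ((p + 2) * D * d) - (j:ℝ) ^ (p + 2) / ((p + 2) * D * d) ≤
        x ^ (p + 1) / D := by
      rw [← sub_div, div_le_div_iff₀ (by positivity) hD]
      push_cast at q2
      calc _ ≤ ((p + 1 + 1) * (d * x ^ (p + 1))) * D := by gcongr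
        _ = _ := by ring
    have r3 : C * ((j + 1) * ((j:ℝ) ^ p + 1)) + C * (x ^ p + 1) ≤
        C * ((x + 1) * (x ^ p + 1)) := by
      rw [← mul_add]
      gcongr
      have : (j:ℝ) ^ p ≤ x ^ p := by gcongr; linarith
      have : ((j:ℝ) + 1) * ((j:ℝ) ^ p + 1) ≤ x * (x ^ p + 1) := by gcongr
      linarith
    push_cast
    rw [abs_le] at h1 i1 ⊢
    constructor <;> linarith [h1.1, h1.2, i1.1, i1.2]

theorem count_aux (m : ℕ) : ∀ (c : Fin (m + 2) → ℕ) (_ : ∀ i, 0 < c i)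
    (_ : Nat.gcd (c 0) (c 1) = 1),
    ∃ C : ℝ, 0 < C ∧ ∀ k : ℕ,
      |(repCount c k : ℝ) -
          (k : ℝ) ^ (m + 1) / ((Nat.factorial (m + 1) : ℝ) * ∏ i : Fin (m + 2), (c i : ℝ))| ≤
        C * ((k : ℝ) ^ m + 1) := by
  induction m with
  | zero =>
    intro c hc hcop
    refine ⟨1, one_pos, fun k => ?_⟩
    have := rep_base_bound c hc hcop k
    simp [Fin.prod_univ_two]
    norm_num
    exact this
  | succ m ih =>
    intro c hc hcop
    obtain ⟨C, hC, h⟩ := ih (fun i => c (Fin.castSucc i)) (fun i => hc _) (by simpa using hcop)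
    have hD : (0:ℝ) < (Nat.factorial (m + 1) : ℝ) * ∏ i : Fin (m + 2), (c (Fin.castSucc i) : ℝ) := by
      have : (0:ℝ) < ∏ i : Fin (m + 2), (c (Fin.castSucc i) : ℝ) :=
        Finset.prod_pos fun i _ => by exact_mod_cast hc _
      positivity
    have st := rec_step m _ (repCount c) (c (Fin.last _)) (hc _) _ C hD hC h
      (fun k hk => rep_small c k hk) (fun k => rep_large c hc k)
    set D : ℝ := (Nat.factorial (m + 1) : ℝ) * ∏ i : Fin (m + 2), (c (Fin.castSucc i) : ℝ) with hDd
    have eD : (Nat.factorial (m + 1 + 1) : ℝ) * ∏ i : Fin (m + 1 + 2), (c i : ℝ)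
        = (m + 2) * D * c (Fin.last _) := by
      rw [Fin.prod_univ_castSucc, Nat.factorial_succ (m + 1), hDd]
      push_cast
      ring
    refine ⟨4 * C + 1 / D, by positivity, fun k => ?_⟩
    rw [eD]
    refine (st k).trans ?_
    have hb : ((k:ℝ) + 1) * ((k:ℝ) ^ m + 1) ≤ 4 * ((k:ℝ) ^ (m + 1) + 1) := by
      rcases Nat.eq_zero_or_pos k with rfl | hk
      · have : ((0:ℕ):ℝ) ^ m ≤ 1 := pow_le_one₀ (by simp) (by simp)
        have : (0:ℝ) ≤ ((0:ℕ):ℝ) ^ (m + 1) := by positivity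
        push_cast at *
        linarith
      · have h1 : (1:ℝ) ≤ k := by exact_mod_cast hk
        have h2 : (1:ℝ) ≤ (k:ℝ) ^ m := one_le_pow₀ h1
        rw [pow_succ]
        nlinarith
    have hx : (k:ℝ) ^ (m + 1) / D ≤ 1 / D * ((k:ℝ) ^ (m + 1) + 1) := by
      rw [div_mul_eq_mul_div, one_mul]
      gcongr
      linarith
    have := mul_le_mul_of_nonneg_left hb hC.le
    linarith

/-- For positive integers `c₀, …, c_l` with `gcd(c₀, c₁) = 1`, the number
`N_k` of `(l+1)`-tuples of nonnegative integers `(a₀, …, a_l)` with `∑ cᵢ aᵢ = k` satisfies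
`|N_k - kˡ/(l!·c₀⋯c_l)| ≤ C (k^{l-1} + 1)` for some constant `C > 0`. -/
theorem count_representations
    (l : ℕ) (hl : 0 < l) (c : Fin (l + 1) → ℕ) (hc : ∀ i, 0 < c i)
    (hcop : Nat.gcd (c 0) (c 1) = 1) :
    ∃ C : ℝ, 0 < C ∧ ∀ k : ℕ,
      |(Nat.card {a : Fin (l + 1) → ℕ // ∑ i : Fin (l + 1), c i * a i = k} : ℝ) -
          (k : ℝ) ^ l / ((Nat.factorial l : ℝ) * ∏ i : Fin (l + 1), (c i : ℝ))| ≤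
        C * ((k : ℝ) ^ (l - 1) + 1) := by
  obtain ⟨m, rfl⟩ : ∃ m, l = m + 1 := ⟨l - 1, by omega⟩
  exact count_aux m c hc hcop
end

section
/- Let l ≥ 1 and c ≥ 1 be integers. There exists a constant C > 0, depending only on l and c, such that for every integer s ≥ 2 and every integer t, the number of (l+1)-tuples of integers (b_0, …, b_l) satisfying both Σ_{i=0}^{l} b_i s^i = t and |b_i| ≤ c·s for all i = 0, …, l is at most C. -/
theorem digits_aux (s : ℤ) (hs : 2 ≤ s) : ∀ (n : ℕ) (d : Fin n → ℤ), (∀ i, |d i| < s) →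
    (∑ i : Fin n, d i * s ^ (i : ℕ)) = 0 → ∀ i, d i = 0 := by
  intro n
  induction n with
  | zero => intro d _ _ i; exact i.elim0
  | succ n ih =>
    intro d hd h
    rw [Fin.sum_univ_succ] at h
    have e : ∑ i : Fin n, d i.succ * s ^ ((i.succ : Fin (n + 1)) : ℕ)
        = s * ∑ i : Fin n, d i.succ * s ^ (i : ℕ) := by
      rw [Finset.mul_sum]
      refine Finset.sum_congr rfl fun i _ => ?_
      rw [Fin.val_succ, pow_succ]; ring
    rw [e] at h
    simp only [Fin.val_zero, pow_zero, mul_one] at h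
    have h0 : d 0 = 0 := by
      refine Int.eq_zero_of_abs_lt_dvd (m := s) ?_ (hd 0)
      exact ⟨-∑ i : Fin n, d i.succ * s ^ (i : ℕ), by linarith⟩
    rw [h0, zero_add] at h
    have h1 := (mul_eq_zero.mp h).resolve_left (by omega)
    have h2 := ih (fun i => d i.succ) (fun i => hd _) h1
    intro i
    exact Fin.cases h0 h2 i

/-- For integers `l ≥ 1` and `c ≥ 1` there is a constant `C`, depending
only on `l` and `c`, bounding the number of `(l+1)`-tuples of integers `(b₀, …, b_l)` with
`∑ bᵢ sⁱ = t` and `|bᵢ| ≤ c·s`, uniformly over integers `s ≥ 2` and `t`. -/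
theorem count_bounded_digit_representations
    (l c : ℕ) (hl : 1 ≤ l) (hc : 1 ≤ c) :
    ∃ C : ℕ, 0 < C ∧ ∀ s : ℤ, 2 ≤ s → ∀ t : ℤ,
      Nat.card {b : Fin (l + 1) → ℤ //
        (∑ i : Fin (l + 1), b i * s ^ (i : ℕ)) = t ∧ ∀ i, |b i| ≤ (c : ℤ) * s} ≤ C := by
  refine ⟨Nat.card (Fin (l + 1) → Finset.Icc (-(c : ℤ)) c), ?_, ?_⟩
  · haveI : Nonempty (Finset.Icc (-(c : ℤ)) c) := ⟨⟨0, by simp⟩⟩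
    exact Nat.card_pos
  intro s hs t
  have hs0 : 0 < s := by omega
  refine Nat.card_le_card_of_injective (fun b i => ⟨b.1 i / s, ?_⟩) ?_
  · have h := abs_le.mp (b.2.2 i)
    rw [Finset.mem_Icc]
    constructor
    · rw [Int.le_ediv_iff_mul_le hs0]; linarith
    · exact Int.ediv_le_of_le_mul hs0 h.2
  · intro b b' hbb
    have hq : ∀ i, b.1 i / s = b'.1 i / s := fun i => congrArg Subtype.val (congrFun hbb i)
    have := digits_aux s hs (l + 1) (fun i => b.1 i - b'.1 i) (fun i => by
      have h1 := Int.emod_add_mul_ediv (b.1 i) s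
      have h2 := Int.emod_add_mul_ediv (b'.1 i) s
      have h3 := Int.emod_lt_of_pos (b.1 i) hs0
      have h4 := Int.emod_lt_of_pos (b'.1 i) hs0
      have h5 := Int.emod_nonneg (b.1 i) hs0.ne'
      have h6 := Int.emod_nonneg (b'.1 i) hs0.ne'
      rw [hq i] at h1
      rw [abs_lt]
      constructor <;> linarith) (by
      simp only [sub_mul, Finset.sum_sub_distrib]
      rw [b.2.1, b'.2.1, sub_self])
    exact Subtype.ext (funext fun i => sub_eq_zero.mp (this i))
end
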